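/- arXiv:1310.6766 — 2 statements merged into one kernel-verified Lean document; each statement's English description precedes it below -/
import Mathlib

section
/- For every integer k ≥ 2 and every integer n with 2k+1 ≤ n ≤ 4k-1, the maximum number of edges in a simple graph on n vertices containing no cycle of length 2k+1 as a subgraph equals g(n,k) = (s-1)·C(2k,2) + C(r,2), where n = (s-1)(2k-1) + r with integers s ≥ 1 and 2 ≤ r ≤ 2k. -/
/-!
The extremal graph consists of a clique on `2k` vertices and a clique on `r = n - 2k + 1 ≤ 2k`
vertices sharing one vertex. In a graph with a cut vertex every cycle stays in one block, so there
is no cycle of length `2k + 1`.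

For the upper bound the parity of the length plays no role. Put `m = μ + 3` and `n = m + d` with
`d ≤ m - 3`; `hasCyc_of_dsum` shows by induction on `n` that more than `C(m-1, 2) + C(d+2, 2)` edges
force a cycle of length `m`. Assume there is none. A vertex of degree at most `d + 1` can be
deleted, which lowers `d` by one, so the minimum degree is at least `d + 2`.

* Suppose that some cycle has length at least `m`, and let `C` be a longest cycle. If `C` is not
  spanning, the ends of a longest path off `C` have at least two neighbours each on `C`, and
  rerouting `C` along this path shows that `C` has at least `2 (d + 2)` vertices
  (`CycIn.two_mul_minDegree_le`). As there is no cycle of length `m`, two consecutive vertices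
  of `C` have at most `|C|` neighbours on `C` in total (`CycIn.dg_add_dg_le`, the chord count in
  Bondy's theorem on pancyclic graphs), and a vertex off `C` is adjacent to at most half of `C`.
  So there are too few edges (`false_of_long_cycle`).
* Suppose that all cycles are shorter than `m`. By a longest path argument some vertex has degree
  at most `m - 2`. Deleting it and applying induction to `m - 1` yields a cycle `C` of length
  `m - 1`, which is a longest one. Let `x` off `C` have the largest number `b` of neighbours on `C`.
  The successors on `C` of the neighbours of `x` have small degrees pairwise, as in Ore's theorem,
  which bounds the edges spanned by `C` (`CycIn.dsum_le_of_outside`). The other edges are counted by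
  removing one by one end vertices of longest paths off `C`: such an end has at most `b`
  neighbours on `C`, and the number of these plus the length of the path is at most half
  of `m - 1`, since `C` cannot be enlarged (`sum_add_dsum_le`). Again there are too few edges
  (`false_of_short_cycle`).

Cycles are handled as functions `ℕ → V`, within vertex subsets `U` of one fixed graph, and edges are
counted twice, through sums of degrees.
-/

open SimpleGraph

/-- `G` contains a cycle of length `L` as a subgraph, i.e. a copy of `C_L`. -/
def ContainsCycleLength {V : Type*} (G : SimpleGraph V) (L : ℕ) : Prop :=
  ∃ (v : V) (w : G.Walk v v), w.IsCycle ∧ w.length = L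

/-- The number of edges of a graph. -/
noncomputable def edgeCount {V : Type*} (G : SimpleGraph V) : ℕ :=
  G.edgeSet.ncard

/-- The Turán number `ex(n; C_{2k+1})`: the maximum number of edges of a simple graph on
`n` vertices containing no cycle of length `2k+1`. -/
noncomputable def exC (n k : ℕ) : ℕ :=
  sSup {m | ∃ G : SimpleGraph (Fin n), ¬ ContainsCycleLength G (2 * k + 1) ∧ edgeCount G = m}


section Aux

open Finset
open scoped Classical

variable {V : Type*}

/-- The number of neighbours of `v` inside the vertex set `U`. -/
noncomputable def dg (G : SimpleGraph V) (U : Finset V) (v : V) : ℕ :=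
  #(U.filter fun w => G.Adj v w)

/-- The number of ordered pairs `(a, b) ∈ A × B` with `a` adjacent to `b`; in particular
`dsum G U U` is twice the number of edges inside `U`. -/
noncomputable def dsum (G : SimpleGraph V) (A B : Finset V) : ℕ := ∑ a ∈ A, dg G B a

/-- `u 0, u 1, …, u (p - 1)` is a path of `G` on `p` vertices, all in `U`. The values `u i` with
`p ≤ i` are irrelevant. -/
structure PathIn (G : SimpleGraph V) (U : Finset V) (u : ℕ → V) (p : ℕ) : Prop where
  mem : ∀ i < p, u i ∈ U
  inj : ∀ i < p, ∀ j < p, u i = u j → i = j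
  adj : ∀ i, i + 1 < p → G.Adj (u i) (u (i + 1))

/-- `u 0, …, u (p - 1)` is, in this cyclic order, a cycle of `G` of length `p` inside `U`. -/
structure CycIn (G : SimpleGraph V) (U : Finset V) (u : ℕ → V) (p : ℕ) : Prop
    extends PathIn G U u p where
  close : G.Adj (u (p - 1)) (u 0)
  three : 3 ≤ p

/-- `G` has a cycle of length `p` inside `U`. -/
def HasCyc (G : SimpleGraph V) (U : Finset V) (p : ℕ) : Prop := ∃ u, CycIn G U u p

/-- The vertex set of a path or cycle. -/
noncomputable def verts (u : ℕ → V) (p : ℕ) : Finset V := (range p).image u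

variable {G : SimpleGraph V} {U : Finset V} {u : ℕ → V} {p : ℕ}

/-! ### Counting adjacencies -/

lemma dg_union {A B : Finset V} (h : Disjoint A B) (v : V) :
    dg G (A ∪ B) v = dg G A v + dg G B v := by
  unfold dg
  rw [filter_union, card_union_of_disjoint (disjoint_filter_filter h)]

lemma dg_mono {A B : Finset V} (h : A ⊆ B) (v : V) : dg G A v ≤ dg G B v :=
  card_le_card (filter_subset_filter _ h)

lemma dg_le_card (A : Finset V) (v : V) : dg G A v ≤ #A := card_filter_le _ _

lemma dg_le_pred {A : Finset V} {v : V} (hv : v ∈ A) : dg G A v ≤ #A - 1 := by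
  rw [← card_erase_of_mem hv]
  apply card_le_card
  intro w hw
  simp only [mem_filter, mem_erase] at hw ⊢
  exact ⟨hw.2.ne', hw.1⟩

lemma dsum_comm (A B : Finset V) : dsum G A B = dsum G B A := by
  unfold dsum dg
  simp only [card_filter]
  rw [sum_comm]
  simp only [G.adj_comm]

lemma dsum_union {A B : Finset V} (h : Disjoint A B) :
    dsum G (A ∪ B) (A ∪ B) = dsum G A A + 2 * dsum G B A + dsum G B B := by
  have h1 : dsum G (A ∪ B) (A ∪ B) = dsum G A A + dsum G A B + (dsum G B A + dsum G B B) := by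
    unfold dsum
    rw [sum_union h]
    simp only [dg_union h, sum_add_distrib]
  rw [h1, dsum_comm A B]
  ring

lemma dsum_le (A : Finset V) : dsum G A A ≤ #A * (#A - 1) := by
  unfold dsum
  calc ∑ a ∈ A, dg G A a ≤ ∑ a ∈ A, (#A - 1) := sum_le_sum fun a ha => dg_le_pred ha
    _ = _ := by simp

lemma dsum_erase {A : Finset V} {x : V} (hx : x ∈ A) :
    dsum G A A = dsum G (A.erase x) (A.erase x) + 2 * dg G A x := by
  have hd : Disjoint (A.erase x) {x} := by simp
  have hu : A.erase x ∪ {x} = A := by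
    ext y; by_cases h : y = x <;> simp [h, hx]
  have h0 : dg G {x} x = 0 := by simp [dg]
  have h1 := dsum_union (G := G) hd
  have h2 := dg_union (G := G) hd x
  rw [hu] at h1 h2
  simp only [dsum, sum_singleton] at h1 ⊢
  rw [h1, h2]
  lia

/-- If an injection sends every index satisfying `P` to an index of `t` violating `Q`, then the
numbers of indices satisfying `P` and `Q` add up to at most `#t`. -/
lemma card_filter_add_le {s t : Finset ℕ} {P Q : ℕ → Prop} (φ : ℕ → ℕ)
    (hφ : ∀ i ∈ s, P i → φ i ∈ t ∧ ¬ Q (φ i))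
    (hinj : ∀ i ∈ s, ∀ j ∈ s, φ i = φ j → i = j) :
    #(s.filter P) + #(t.filter Q) ≤ #t := by
  have h1 : #((s.filter P).image φ) = #(s.filter P) := by
    apply card_image_of_injOn
    intro i hi j hj h
    simp only [coe_filter, Set.mem_ofPred_eq] at hi hj
    exact hinj i hi.1 j hj.1 h
  rw [← h1, ← card_union_of_disjoint]
  · apply card_le_card
    intro i hi
    simp only [mem_union, mem_image, mem_filter] at hi
    rcases hi with ⟨j, hj, rfl⟩ | hi
    · exact (hφ j hj.1 hj.2).1
    · exact hi.1
  · rw [Finset.disjoint_left]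
    intro i hi hi'
    simp only [mem_image, mem_filter] at hi hi'
    obtain ⟨j, hj, rfl⟩ := hi
    exact (hφ j hj.1 hj.2).2 hi'.2

/-! ### Paths and cycles -/

lemma mem_verts {x : V} : x ∈ verts u p ↔ ∃ i < p, u i = x := by simp [verts]

lemma PathIn.card_verts (h : PathIn G U u p) : #(verts u p) = p := by
  unfold verts
  rw [card_image_of_injOn, card_range]
  intro i hi j hj hij
  exact h.inj i (by simpa using hi) j (by simpa using hj) hij

lemma PathIn.verts_subset (h : PathIn G U u p) : verts u p ⊆ U := by
  intro x hx
  obtain ⟨i, hi, rfl⟩ := mem_verts.1 hx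
  exact h.mem i hi

lemma PathIn.le_card (h : PathIn G U u p) : p ≤ #U := by
  rw [← h.card_verts]
  exact card_le_card h.verts_subset

lemma PathIn.mono {U' : Finset V} (h : PathIn G U u p) (hU : U ⊆ U') : PathIn G U' u p :=
  ⟨fun i hi => hU (h.mem i hi), h.inj, h.adj⟩

lemma CycIn.mono {U' : Finset V} (h : CycIn G U u p) (hU : U ⊆ U') : CycIn G U' u p :=
  ⟨h.toPathIn.mono hU, h.close, h.three⟩

lemma PathIn.dg_verts (h : PathIn G U u p) (x : V) :
    dg G (verts u p) x = #((range p).filter fun i => G.Adj x (u i)) := by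
  unfold dg verts
  rw [filter_image, card_image_of_injOn]
  intro i hi j hj hij
  simp only [coe_filter, Set.mem_ofPred_eq, mem_range] at hi hj
  exact h.inj i hi.1 j hj.1 hij

lemma add_mod_cases {i s p : ℕ} (hs : s < p) (hi : i < p) :
    (i + s < p ∧ (i + s) % p = i + s) ∨ (p ≤ i + s ∧ (i + s) % p = i + s - p) := by
  rcases lt_or_ge (i + s) p with h | h
  · exact Or.inl ⟨h, Nat.mod_eq_of_lt h⟩
  · right
    refine ⟨h, ?_⟩
    rw [Nat.mod_eq_sub_mod h, Nat.mod_eq_of_lt (by omega)]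

lemma CycIn.rotate (h : CycIn G U u p) {s : ℕ} (hs : s < p) :
    CycIn G U (fun i => u ((i + s) % p)) p := by
  have h3 := h.three
  refine ⟨⟨fun i hi => h.mem _ (Nat.mod_lt _ (by omega)), fun i hi j hj hij => ?_,
    fun i hi => ?_⟩, ?_, h3⟩
  · have := h.inj _ (Nat.mod_lt _ (by omega)) _ (Nat.mod_lt _ (by omega)) hij
    rcases add_mod_cases hs hi with h1 | h1 <;> rcases add_mod_cases hs hj with h2 | h2 <;> omega
  · show G.Adj (u ((i + s) % p)) (u ((i + 1 + s) % p))
    rcases add_mod_cases hs (show i < p by omega) with h1 | h1 <;>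
      rcases add_mod_cases hs hi with h2 | h2
    · rw [h1.2, h2.2, show i + 1 + s = i + s + 1 by ring]
      exact h.adj _ (by omega)
    · rw [h1.2, h2.2, show i + s = p - 1 by omega, show i + 1 + s - p = 0 by omega]
      exact h.close
    · omega
    · rw [h1.2, h2.2, show i + 1 + s - p = i + s - p + 1 by omega]
      exact h.adj _ (by omega)
  · show G.Adj (u ((p - 1 + s) % p)) (u ((0 + s) % p))
    rw [zero_add, Nat.mod_eq_of_lt hs]
    rcases add_mod_cases hs (show p - 1 < p by omega) with h1 | h1
    · rw [h1.2, show s = 0 by omega]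
      simpa using h.close
    · rw [h1.2]
      have := h.adj (s - 1) (by omega)
      rwa [show s - 1 + 1 = s by omega, show s - 1 = p - 1 + s - p by omega] at this

lemma CycIn.reverse (h : CycIn G U u p) : CycIn G U (fun i => u (p - 1 - i)) p := by
  have h3 := h.three
  refine ⟨⟨fun i hi => h.mem _ (by omega), fun i hi j hj hij => ?_, fun i hi => ?_⟩, ?_, h3⟩
  · have := h.inj _ (by omega) _ (by omega) hij
    omega
  · have := h.adj (p - 1 - (i + 1)) (by omega)
    rw [show p - 1 - (i + 1) + 1 = p - 1 - i by omega] at this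
    exact this.symm
  · simpa using h.close.symm

lemma verts_of_maps {u' : ℕ → V} {U' : Finset V} (h : PathIn G U u p) (h' : PathIn G U' u' p)
    (hm : ∀ i < p, ∃ j < p, u' i = u j) : verts u' p = verts u p := by
  apply eq_of_subset_of_card_le
  · intro x hx
    obtain ⟨i, hi, rfl⟩ := mem_verts.1 hx
    obtain ⟨j, hj, hij⟩ := hm i hi
    exact mem_verts.2 ⟨j, hj, hij.symm⟩
  · rw [h.card_verts, h'.card_verts]

lemma CycIn.verts_rotate (h : CycIn G U u p) {s : ℕ} (hs : s < p) :
    verts (fun i => u ((i + s) % p)) p = verts u p :=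
  verts_of_maps h.toPathIn (h.rotate hs).toPathIn
    fun i _ => ⟨(i + s) % p, Nat.mod_lt _ (by omega), rfl⟩

/-- A cycle may be re-indexed so as to start at any prescribed vertex. -/
lemma CycIn.exists_start (h : CycIn G U u p) {x : V} (hx : x ∈ verts u p) :
    ∃ u', CycIn G U u' p ∧ verts u' p = verts u p ∧ u' 0 = x := by
  obtain ⟨s, hs, rfl⟩ := mem_verts.1 hx
  exact ⟨_, h.rotate hs, h.verts_rotate hs, by simp [Nat.mod_eq_of_lt hs]⟩

/-- A path longest among those inside `R` contains all neighbours in `R` of its first vertex. -/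
lemma exists_longest_path {R : Finset V} (hR : R.Nonempty) :
    ∃ u p, 1 ≤ p ∧ PathIn G R u p ∧ ∀ z ∈ R, G.Adj (u 0) z → ∃ i < p, u i = z := by
  obtain ⟨x, hx⟩ := hR
  have h1 : ∃ u, PathIn G R u 1 :=
    ⟨fun _ => x, fun _ _ => hx, fun i hi j hj _ => by omega, fun i hi => by omega⟩
  have hb : ∀ p, (∃ u, PathIn G R u p) → p ≤ #R := fun p ⟨u, hu⟩ => hu.le_card
  have hcard : 1 ≤ #R := hb 1 h1
  set p := Nat.findGreatest (fun p => ∃ u, PathIn G R u p) #R with hp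
  obtain ⟨u, hu⟩ : ∃ u, PathIn G R u p :=
    Nat.findGreatest_spec (P := fun p => ∃ u, PathIn G R u p) hcard h1
  have hp1 : 1 ≤ p := Nat.le_findGreatest hcard h1
  refine ⟨u, p, hp1, hu, fun z hz hadj => ?_⟩
  by_contra! hne
  have hnew : PathIn G R (fun i => if i = 0 then z else u (i - 1)) (p + 1) := by
    refine ⟨fun i hi => ?_, fun i hi j hj hij => ?_, fun i hi => ?_⟩
    · by_cases h0 : i = 0
      · simpa [h0] using hz
      · simpa [h0] using hu.mem (i - 1) (by omega)
    · by_cases h0 : i = 0 <;> by_cases h0' : j = 0 <;> simp only [h0, h0', if_true, if_false] at hij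
      · omega
      · exact absurd hij.symm (hne _ (by omega))
      · exact absurd hij (hne _ (by omega))
      · have := hu.inj _ (by omega) _ (by omega) hij
        omega
    · by_cases h0 : i = 0
      · simpa [h0] using hadj.symm
      · have := hu.adj (i - 1) (by omega)
        simpa [h0, show i - 1 + 1 = i by omega] using this
  have := Nat.le_findGreatest (P := fun p => ∃ u, PathIn G R u p) (hb _ ⟨_, hnew⟩) ⟨_, hnew⟩
  omega

lemma dg_le_of_path {R : Finset V} (hu : PathIn G R u p) (hp : 1 ≤ p)
    (hnb : ∀ z ∈ R, G.Adj (u 0) z → ∃ i < p, u i = z) : dg G R (u 0) ≤ p - 1 := by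
  have h1 : dg G R (u 0) ≤ dg G (verts u p) (u 0) := by
    apply card_le_card
    intro z hz
    simp only [mem_filter] at hz ⊢
    exact ⟨mem_verts.2 (hnb z hz.1 hz.2), hz.2⟩
  have h2 := dg_le_pred (G := G) (A := verts u p) (v := u 0) (mem_verts.2 ⟨0, by omega, rfl⟩)
  rw [hu.card_verts] at h2
  omega

/-- Large minimum degree forces a long cycle: close up a longest path at the farthest neighbour
of its first vertex. -/
lemma exists_cycle_of_minDegree {m : ℕ} (hU : U.Nonempty) (hm : 3 ≤ m)
    (hdeg : ∀ v ∈ U, m - 1 ≤ dg G U v) : ∃ l, m ≤ l ∧ HasCyc G U l := by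
  obtain ⟨u, p, hp, hu, hnb⟩ := exists_longest_path (G := G) hU
  obtain ⟨i, hi, him, hadj⟩ : ∃ i < p, m - 1 ≤ i ∧ G.Adj (u 0) (u i) := by
    by_contra! hcon
    have h1 := hdeg (u 0) (hu.mem 0 (by omega))
    have h2 : dg G U (u 0) ≤ #((Ico 1 (m - 1)).image u) := by
      apply card_le_card
      intro z hz
      simp only [mem_filter] at hz
      obtain ⟨i, hi, rfl⟩ := hnb z hz.1 hz.2
      refine mem_image_of_mem _ (mem_Ico.2 ⟨?_, ?_⟩)
      · by_contra h0
        rw [show i = 0 by omega] at hz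
        exact G.irrefl hz.2
      · by_contra h0
        exact hcon i hi (by omega) hz.2
    have h3 : #((Ico 1 (m - 1)).image u) ≤ #(Ico 1 (m - 1)) := card_image_le
    simp only [Nat.card_Ico] at h3
    omega
  refine ⟨i + 1, by omega, u, ⟨⟨fun j hj => hu.mem j (by omega),
    fun j hj k hk => hu.inj j (by omega) k (by omega), fun j hj => hu.adj j (by omega)⟩, ?_,
    by omega⟩⟩
  simpa using hadj.symm

lemma PathIn.append {w : ℕ → V} {q : ℕ} (h : PathIn G U u p) (h' : PathIn G U w q)
    (hp : 1 ≤ p) (hd : ∀ i < p, ∀ j < q, u i ≠ w j) (hadj : G.Adj (u (p - 1)) (w 0)) :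
    PathIn G U (fun i => if i < p then u i else w (i - p)) (p + q) := by
  refine ⟨fun i hi => ?_, fun i hi j hj hij => ?_, fun i hi => ?_⟩
  · by_cases h0 : i < p
    · simpa [h0] using h.mem i h0
    · simpa [h0] using h'.mem (i - p) (by omega)
  · by_cases h0 : i < p <;> by_cases h1 : j < p <;> simp only [h0, h1, if_true, if_false] at hij
    · exact h.inj _ h0 _ h1 hij
    · exact absurd hij (hd _ h0 _ (by omega))
    · exact absurd hij.symm (hd _ h1 _ (by omega))
    · have := h'.inj _ (by omega) _ (by omega) hij
      omega
  · by_cases h0 : i + 1 < p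
    · simpa [h0, show i < p by omega] using h.adj i h0
    · by_cases h1 : i < p
      · obtain rfl : i = p - 1 := by omega
        simpa [h1, h0, show p - 1 + 1 - p = 0 by omega] using hadj
      · have := h'.adj (i - p) (by omega)
        simpa [h1, h0, show i + 1 - p = i - p + 1 by omega] using this

lemma PathIn.shift (h : PathIn G U u p) (a : ℕ) {q : ℕ} (hq : a + q ≤ p) :
    PathIn G U (fun i => u (a + i)) q := by
  refine ⟨fun i hi => h.mem _ (by omega), fun i hi j hj hij => ?_, fun i hi => ?_⟩
  · have := h.inj _ (by omega) _ (by omega) hij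
    omega
  · exact h.adj (a + i) (by omega)

lemma PathIn.back (h : PathIn G U u p) {b q : ℕ} (hb : b < p) (hq : q ≤ b + 1) :
    PathIn G U (fun i => u (b - i)) q := by
  refine ⟨fun i hi => h.mem _ (by omega), fun i hi j hj hij => ?_, fun i hi => ?_⟩
  · have := h.inj _ (by omega) _ (by omega) hij
    omega
  · have := h.adj (b - (i + 1)) (by omega)
    rw [show b - (i + 1) + 1 = b - i by omega] at this
    exact this.symm

lemma PathIn.single {x : V} (hx : x ∈ U) : PathIn G U (fun _ => x) 1 :=
  ⟨fun _ _ => hx, fun i hi j hj _ => by omega, fun i hi => by omega⟩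

lemma PathIn.ne (h : PathIn G U u p) {i j : ℕ} (hi : i < p) (hj : j < p) (hij : i ≠ j) :
    u i ≠ u j := fun e => hij (h.inj i hi j hj e)

lemma PathIn.hasCyc (h : PathIn G U u p) (hp : 3 ≤ p) (hc : G.Adj (u (p - 1)) (u 0)) :
    HasCyc G U p := ⟨u, ⟨h, hc, hp⟩⟩

/-- Two disjoint paths whose ends are joined crosswise form a cycle. -/
lemma hasCyc_append {w : ℕ → V} {q m : ℕ} (h : PathIn G U u p) (h' : PathIn G U w q)
    (hp : 1 ≤ p) (hq : 1 ≤ q) (hm : m = p + q) (h3 : 3 ≤ m)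
    (hd : ∀ i < p, ∀ j < q, u i ≠ w j) (hadj : G.Adj (u (p - 1)) (w 0))
    (hc : G.Adj (w (q - 1)) (u 0)) : HasCyc G U m := by
  subst hm
  refine (h.append h' hp hd hadj).hasCyc h3 ?_
  simpa [show ¬ (p + q - 1 < p) by omega, show 0 < p by omega,
    show p + q - 1 - p = q - 1 by omega] using hc

/-! ### Cycles with many chords -/

/-- Degree condition on two consecutive vertices of a cycle of length `l ≥ m` when there is no
cycle of length `m`. -/
lemma CycIn.dg_add_dg_le {l m : ℕ} (h : CycIn G U u l) (hm : 3 ≤ m) (hml : m ≤ l)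
    (hno : ¬ HasCyc G U m) : dg G (verts u l) (u 0) + dg G (verts u l) (u 1) ≤ l := by
  have hP := h.toPathIn
  rw [hP.dg_verts, hP.dg_verts]
  have key := card_filter_add_le (s := Ico 2 l) (t := Ico 2 l) (P := fun i => G.Adj (u 0) (u i))
    (Q := fun i => G.Adj (u 1) (u i))
    (fun j => if m - 1 ≤ j then j - (m - 3) else j + l + 1 - m) ?_ ?_
  · have h0 : #((range l).filter fun i => G.Adj (u 0) (u i)) ≤
        #((Ico 2 l).filter fun i => G.Adj (u 0) (u i)) + 1 := by
      rw [← card_singleton 1]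
      refine (card_le_card fun i hi => ?_).trans (card_union_le _ _)
      simp only [mem_filter, mem_range, mem_union, mem_Ico, mem_singleton] at hi ⊢
      have : i ≠ 0 := by rintro rfl; exact G.irrefl hi.2
      by_cases i = 1
      · right; assumption
      · left; exact ⟨by omega, hi.2⟩
    have h1 : #((range l).filter fun i => G.Adj (u 1) (u i)) ≤
        #((Ico 2 l).filter fun i => G.Adj (u 1) (u i)) + 1 := by
      rw [← card_singleton 0]
      refine (card_le_card fun i hi => ?_).trans (card_union_le _ _)
      simp only [mem_filter, mem_range, mem_union, mem_Ico, mem_singleton] at hi ⊢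
      have : i ≠ 1 := by rintro rfl; exact G.irrefl hi.2
      by_cases i = 0
      · right; assumption
      · left; exact ⟨by omega, hi.2⟩
    rw [Nat.card_Ico] at key
    omega
  · intro j hj hadj
    rw [mem_Ico] at hj
    by_cases hjm : m - 1 ≤ j
    · rw [if_pos hjm]
      refine ⟨mem_Ico.2 ⟨by omega, by omega⟩, fun hadj' => hno ?_⟩
      -- the cycle `u₀, u₁, u_{j-(m-3)}, …, u_j`
      refine hasCyc_append (hP.shift 0 (q := 2) (by omega))
        (hP.shift (j - (m - 3)) (q := m - 2) (by omega)) (by omega) (by omega) (by omega) hm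
        (fun a ha b hb => hP.ne (by omega) (by omega) (by omega)) ?_ ?_
      · simpa using hadj'
      · simpa [show j - (m - 3) + (m - 2 - 1) = j by omega] using hadj.symm
    · rw [if_neg hjm]
      refine ⟨mem_Ico.2 ⟨by omega, by omega⟩, fun hadj' => hno ?_⟩
      -- the cycle `u₁, …, u_j, u₀, u_{l-1}, …, u_{j+l+1-m}`
      have hA : PathIn G U (fun i => if i < 1 then u 0 else u (l - 1 - (i - 1)))
          (1 + (m - 1 - j)) :=
        (PathIn.single (hP.mem 0 (by omega))).append
          (hP.back (b := l - 1) (q := m - 1 - j) (by omega) (by omega)) le_rfl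
          (fun a ha b hb => hP.ne (by omega) (by omega) (by omega)) (by simpa using h.close.symm)
      refine hasCyc_append (hP.shift 1 (q := j) (by omega)) hA (by omega) (by omega) (by omega) hm
        (fun a ha b hb => ?_) ?_ ?_
      · split_ifs
        · exact hP.ne (by omega) (by omega) (by omega)
        · exact hP.ne (by omega) (by omega) (by omega)
      · simpa [show 1 + (j - 1) = j by omega] using hadj.symm
      · have e : l - 1 - (m - 1 - j - 1) = j + l + 1 - m := by omega
        simpa [show ¬ (1 + (m - 1 - j) - 1 < 1) by omega, e,
          show ¬ (m - 1 - j = 0) by omega] using hadj'.symm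
  · intro i hi j hj hij
    rw [mem_Ico] at hi hj
    split_ifs at hij <;> omega

lemma sum_range_rotate (F : ℕ → ℕ) (l : ℕ) :
    ∑ i ∈ range l, F ((i + 1) % l) = ∑ i ∈ range l, F i := by
  rcases l with _ | k
  · simp
  · rw [sum_range_succ, sum_range_succ', Nat.mod_self]
    congr 1
    refine sum_congr rfl fun i hi => ?_
    rw [mem_range] at hi
    rw [Nat.mod_eq_of_lt (by omega)]

lemma PathIn.sum_verts (h : PathIn G U u p) (F : V → ℕ) :
    ∑ x ∈ verts u p, F x = ∑ i ∈ range p, F (u i) := by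
  unfold verts
  rw [sum_image]
  intro i hi j hj hij
  exact h.inj i (by simpa using hi) j (by simpa using hj) hij

/-- A cycle of length `l` spanning more than `l² / 4` edges gives cycles of every length
`m` with `3 ≤ m ≤ l`. -/
lemma CycIn.two_mul_dsum_le {l m : ℕ} (h : CycIn G U u l) (hm : 3 ≤ m) (hml : m ≤ l)
    (hno : ¬ HasCyc G U m) : 2 * dsum G (verts u l) (verts u l) ≤ l * l := by
  have h1 : ∀ i ∈ range l, dg G (verts u l) (u i) + dg G (verts u l) (u ((i + 1) % l)) ≤ l := by
    intro i hi
    rw [mem_range] at hi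
    have := (h.rotate hi).dg_add_dg_le hm hml hno
    rw [h.verts_rotate hi] at this
    simpa [Nat.mod_eq_of_lt hi, add_comm 1 i] using this
  have h2 := sum_le_sum h1
  rw [sum_add_distrib, sum_range_rotate (fun i => dg G (verts u l) (u i))] at h2
  unfold dsum
  rw [h.sum_verts]
  simp only [sum_const, card_range, smul_eq_mul] at h2
  omega

/-- A vertex off a cycle of length `l ≥ m - 1` sees at most half of it when there is no cycle of
length `m`. -/
lemma CycIn.two_mul_dg_le {l m : ℕ} (h : CycIn G U u l) {x : V} (hx : x ∈ U)
    (hxC : x ∉ verts u l) (hm : 3 ≤ m) (hml : m ≤ l + 1)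
    (hno : ¬ HasCyc G U m) : 2 * dg G (verts u l) x ≤ l := by
  have h3 := h.three
  rw [h.dg_verts]
  have key := card_filter_add_le (s := range l) (t := range l) (P := fun i => G.Adj x (u i))
    (Q := fun i => G.Adj x (u i)) (fun i => (i + (m - 2)) % l) ?_ ?_
  · rw [card_range] at key
    omega
  · intro i hi hadj
    rw [mem_range] at hi
    refine ⟨mem_range.2 (Nat.mod_lt _ (by omega)), fun hadj' => hno ?_⟩
    have hr := h.rotate hi
    have hne : ∀ j < l, x ≠ u ((j + i) % l) := fun j hj e =>
      hxC (mem_verts.2 ⟨_, Nat.mod_lt _ (by omega), e.symm⟩)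
    refine hasCyc_append (PathIn.single hx) (hr.shift 0 (q := m - 1) (by omega)) le_rfl (by omega)
      (by omega) hm (fun a ha b hb => hne _ (by omega)) ?_ ?_
    · simpa [Nat.mod_eq_of_lt hi] using hadj
    · simpa [show m - 1 - 1 + i = i + (m - 2) by omega] using hadj'.symm
  · intro i hi j hj hij
    rw [mem_range] at hi hj
    have hs : m - 2 < l := by omega
    rcases add_mod_cases hs hi with h1 | h1 <;> rcases add_mod_cases hs hj with h2 | h2 <;> omega

/-- Along a longest cycle, two neighbours of the two ends of an outside path on `p` vertices
are far apart. -/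
lemma CycIn.gap {l : ℕ} (h : CycIn G U u l) (hlong : ∀ m, l < m → ¬ HasCyc G U m)
    {w : ℕ → V} (hw : PathIn G U w p) (hp : 1 ≤ p) (hd : ∀ i < p, w i ∉ verts u l)
    (h0 : G.Adj (w (p - 1)) (u 0)) {i : ℕ} (hi : i < l) (hadj : G.Adj (w 0) (u i)) :
    p + 1 + i ≤ l := by
  have h3 := h.three
  by_contra hcon
  -- the cycle `w₀, …, w_{p-1}, u₀, …, u_i`
  refine hlong (p + (i + 1)) (by omega) (hasCyc_append hw (h.shift 0 (q := i + 1) (by omega)) hp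
    (by omega) rfl (by omega) (fun a ha b hb e => hd a ha ?_) (by simpa using h0)
    (by simpa using hadj.symm))
  exact mem_verts.2 ⟨0 + b, by omega, e.symm⟩

/-- A path on `p` vertices outside a longest cycle, whose last vertex has a neighbour on the
cycle and whose first vertex has at least two, forces the cycle to be long: the neighbours of the
first vertex are pairwise nonconsecutive, and they stay away from a window of radius `p` around
the given neighbour of the last vertex. -/
lemma CycIn.length_ge {l : ℕ} (h : CycIn G U u l) (hlong : ∀ m, l < m → ¬ HasCyc G U m)
    {w : ℕ → V} (hw : PathIn G U w p) (hp : 1 ≤ p) (hd : ∀ i < p, w i ∉ verts u l)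
    (h1 : 1 ≤ dg G (verts u l) (w (p - 1))) (h2 : 2 ≤ dg G (verts u l) (w 0)) :
    2 * dg G (verts u l) (w 0) + 2 * (p - 1) ≤ l := by
  obtain ⟨v, hv⟩ := card_pos.1 h1
  rw [mem_filter] at hv
  obtain ⟨u', hu', hverts, rfl⟩ := h.exists_start hv.1
  rw [← hverts] at h2 hd ⊢
  have h3 := h.three
  have hfar : ∀ i < l, i ≠ 0 → G.Adj (w 0) (u' i) → p + 1 ≤ i ∧ p + 1 + i ≤ l := by
    intro i hi hi0 hadj
    refine ⟨?_, hu'.gap hlong hw hp hd hv.2 hi hadj⟩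
    have hrev := hu'.reverse.rotate (s := l - 1) (by omega)
    have hv' : verts (fun t => u' (l - 1 - (t + (l - 1)) % l)) l = verts u' l :=
      verts_of_maps hu'.toPathIn hrev.toPathIn fun t _ =>
        ⟨l - 1 - (t + (l - 1)) % l, by omega, rfl⟩
    have e : l - 1 - (l - i + (l - 1)) % l = i := by
      rcases add_mod_cases (s := l - 1) (i := l - i) (p := l) (by omega) (by omega) with h | h <;>
        omega
    have := hrev.gap (i := l - i) hlong hw hp (by rw [hv']; exact hd)
      (by simpa [Nat.mod_eq_of_lt (show l - 1 < l by omega)] using hv.2) (by omega)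
      (by simpa only [e] using hadj)
    omega
  rw [hu'.dg_verts] at h2 ⊢
  have hsub : #((range l).filter fun i => G.Adj (w 0) (u' i)) ≤
      #((Icc (p + 1) (l - p)).filter fun i => G.Adj (w 0) (u' i)) + 1 := by
    refine (card_le_card (t := _ ∪ {0}) fun i hi => ?_).trans (card_union_le _ {0})
    simp only [mem_filter, mem_range, mem_union, mem_Icc, mem_singleton] at hi ⊢
    by_cases h0 : i = 0
    · exact Or.inr h0
    · have := hfar i hi.1 h0 hi.2
      exact Or.inl ⟨by omega, hi.2⟩
  have key := card_filter_add_le (s := Icc (p + 1) (l - p)) (t := Icc (p + 1) (l - p))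
    (P := fun i => G.Adj (w 0) (u' i)) (Q := fun i => G.Adj (w 0) (u' i)) (fun i => i + 1)
    (fun i hi hadj => ?_) (fun i _ j _ hij => by omega)
  · rw [Nat.card_Icc] at key
    omega
  · rw [mem_Icc] at hi
    have hi' := hfar i (by omega) (by omega) hadj
    refine ⟨mem_Icc.2 (by omega), fun hadj' => hlong (l + 1) (by omega) ?_⟩
    -- two consecutive neighbours: insert `w 0` between them
    have hr := hu'.rotate (s := i + 1) (by omega)
    refine hasCyc_append (PathIn.single (hw.mem 0 (by omega))) hr.toPathIn le_rfl (by omega)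
      (by omega) (by omega) (fun a ha b hb e => hd 0 (by omega)
        (mem_verts.2 ⟨_, Nat.mod_lt _ (by omega), e.symm⟩)) ?_ ?_
    · simpa [Nat.mod_eq_of_lt (show i + 1 < l by omega)] using hadj'
    · have e : (l - 1 + (i + 1)) % l = i := by
        rw [show l - 1 + (i + 1) = i + l by omega, Nat.add_mod_right, Nat.mod_eq_of_lt (by omega)]
      simpa only [e] using hadj.symm

/-! ### The cycle seen from an outside vertex -/

/-- Degree condition on the ends of a path whose vertex set carries no spanning cycle. -/
lemma PathIn.dg_ends_le {M : ℕ} (h : PathIn G U u M) (hM : 3 ≤ M) (hno : ¬ HasCyc G U M) :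
    dg G (verts u M) (u 0) + dg G (verts u M) (u (M - 1)) ≤ M - 1 := by
  rw [h.dg_verts, h.dg_verts]
  have key := card_filter_add_le (s := Ico 1 M) (t := range (M - 1))
    (P := fun i => G.Adj (u 0) (u i)) (Q := fun i => G.Adj (u (M - 1)) (u i)) (fun i => i - 1)
    (fun i hi hadj => ?_) (fun i hi j hj hij => by rw [mem_Ico] at hi hj; omega)
  · rw [card_range] at key
    refine le_trans (add_le_add (card_le_card fun i hi => ?_) (card_le_card fun i hi => ?_)) key
    · simp only [mem_filter, mem_range, mem_Ico] at hi ⊢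
      have : i ≠ 0 := by rintro rfl; exact G.irrefl hi.2
      exact ⟨by omega, hi.2⟩
    · simp only [mem_filter, mem_range] at hi ⊢
      have : i ≠ M - 1 := by rintro rfl; exact G.irrefl hi.2
      exact ⟨by omega, hi.2⟩
  · rw [mem_Ico] at hi
    refine ⟨mem_range.2 (by omega), fun hadj' => hno ?_⟩
    refine hasCyc_append (h.shift 0 (q := i) (by omega))
      (h.back (b := M - 1) (q := M - i) (by omega) (by omega)) (by omega) (by omega) (by omega) hM
      (fun a ha b hb => h.ne (by omega) (by omega) (by omega)) ?_ ?_
    · simpa using hadj'.symm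
    · simpa [show M - 1 - (M - i - 1) = i by omega] using hadj.symm

/-- If an outside vertex `x` sees `u (l - 1)` and `u (k - 1)`, then the successors `u 0` and `u k`
satisfy an Ore-type degree condition, being the ends of a path spanning the cycle and `x`. -/
lemma CycIn.dg_succ_add_le {l k : ℕ} (h : CycIn G U u l) {x : V} (hx : x ∈ U)
    (hxC : x ∉ verts u l) (hno : ¬ HasCyc G U (l + 1)) (hk : 1 ≤ k) (hkl : k < l)
    (h0 : G.Adj x (u (l - 1))) (h1 : G.Adj x (u (k - 1))) :
    dg G (verts u l) (u 0) + dg G (verts u l) (u k) ≤ l := by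
  have h3 := h.three
  have hne : ∀ i < l, x ≠ u i := fun i hi e => hxC (mem_verts.2 ⟨i, hi, e.symm⟩)
  have hA := (PathIn.single hx).append
    (h.back (b := l - 1) (q := l - k) (by omega) (by omega)) le_rfl
    (fun a ha b hb => hne _ (by omega)) (by simpa using h0)
  have hB := (h.shift 0 (q := k) (by omega)).append hA hk (fun a ha b hb => by
    split_ifs
    · exact (hne _ (by omega)).symm
    · exact h.ne (by omega) (by omega) (by omega)) (by simpa using h1.symm)
  rw [show k + (1 + (l - k)) = l + 1 by omega] at hB
  have key := hB.dg_ends_le (by omega) hno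
  have e0 : ¬ (l < k) := by omega
  have e1 : ¬ (l - k = 0) := by omega
  have e2 : l - 1 - (l - k - 1) = k := by omega
  have e3 : 0 < k := hk
  simp only [Nat.add_sub_cancel, e0, e3, if_true, if_false, Nat.lt_one_iff, e1, e2, zero_add]
    at key
  refine le_trans (add_le_add (dg_mono ?_ _) (dg_mono ?_ _)) key
  all_goals
    intro y hy
    obtain ⟨i, hi, rfl⟩ := mem_verts.1 hy
    by_cases hik : i < k
    · exact mem_verts.2 ⟨i, by omega, by simp [hik]⟩
    · refine mem_verts.2 ⟨k + (l - i), by omega, ?_⟩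
      have e4 : ¬ (l - i = 0) := by omega
      have e5 : l - 1 - (l - i - 1) = i := by omega
      simp [e4, e5]

lemma two_mul_sum_le {S : Finset V} {F : V → ℕ} {l : ℕ} (hS : 2 ≤ #S)
    (h : ∀ s ∈ S, ∀ t ∈ S, s ≠ t → F s + F t ≤ l) : 2 * ∑ s ∈ S, F s ≤ #S * l := by
  by_cases hsmall : ∀ s ∈ S, 2 * F s ≤ l
  · rw [mul_sum]
    calc ∑ s ∈ S, 2 * F s ≤ ∑ s ∈ S, l := sum_le_sum hsmall
      _ = _ := by simp
  · push Not at hsmall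
    obtain ⟨s, hs, hsl⟩ := hsmall
    obtain ⟨t, ht⟩ : (S.erase s).Nonempty := by
      rw [← card_pos, card_erase_of_mem hs]; omega
    have ht' := mem_erase.1 ht
    have h1 := h s hs t ht'.2 ht'.1.symm
    have h2 : ∑ r ∈ (S.erase s).erase t, 2 * F r ≤ ∑ r ∈ (S.erase s).erase t, l := by
      refine sum_le_sum fun r hr => ?_
      simp only [mem_erase] at hr
      have := h s hs r hr.2.2 hr.2.1.symm
      omega
    rw [← mul_sum, sum_const, smul_eq_mul, card_erase_of_mem ht, card_erase_of_mem hs] at h2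
    have h3 := add_sum_erase _ F hs
    have h4 := add_sum_erase _ F ht
    obtain ⟨c, hc⟩ : ∃ c, #S = c + 2 := ⟨#S - 2, by omega⟩
    rw [hc] at h2 ⊢
    simp only [show c + 2 - 1 - 1 = c by omega] at h2
    nlinarith

/-- If an outside vertex `x` has `b ≥ 2` neighbours on a cycle of length `l`, and there is no cycle
of length `l + 1`, then the cycle spans few edges: the `b` successors of the neighbours of `x` have
average degree at most `l / 2` in the cycle. -/
lemma CycIn.dsum_le_of_outside {l b : ℕ} (h : CycIn G U u l) {x : V} (hx : x ∈ U)
    (hxC : x ∉ verts u l) (hno : ¬ HasCyc G U (l + 1)) (hb : dg G (verts u l) x = b)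
    (hb2 : 2 ≤ b) :
    dsum G (verts u l) (verts u l) ≤ (l - b) * (l - b - 1) + b * l := by
  have h3 := h.three
  set C := verts u l with hC
  set S := ((range l).filter fun i => G.Adj x (u i)).image fun i => u ((i + 1) % l) with hS
  have hScard : #S = b := by
    rw [hS, card_image_of_injOn, ← hb, h.dg_verts]
    intro i hi j hj hij
    simp only [coe_filter, Set.mem_ofPred_eq, mem_range] at hi hj
    have := h.inj _ (Nat.mod_lt _ (by omega)) _ (Nat.mod_lt _ (by omega)) hij
    rcases add_mod_cases (s := 1) (by omega) hi.1 with h1 | h1 <;>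
      rcases add_mod_cases (s := 1) (by omega) hj.1 with h2 | h2 <;> omega
  have hSC : S ⊆ C := by
    intro y hy
    obtain ⟨i, -, rfl⟩ := mem_image.1 hy
    exact mem_verts.2 ⟨_, Nat.mod_lt _ (by omega), rfl⟩
  have hpair : ∀ s ∈ S, ∀ t ∈ S, s ≠ t → dg G C s + dg G C t ≤ l := by
    intro s hs t ht hst
    obtain ⟨i, hi, rfl⟩ := mem_image.1 hs
    obtain ⟨j, hj, rfl⟩ := mem_image.1 ht
    simp only [mem_filter, mem_range] at hi hj
    -- re-index the cycle so that the successor of `u i` comes first and `u i` last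
    have hsl : (i + 1) % l < l := Nat.mod_lt _ (by omega)
    have hr := h.rotate hsl
    have hlast : (l - 1 + (i + 1) % l) % l = i := by
      rw [Nat.add_mod_mod, show l - 1 + (i + 1) = i + l by omega, Nat.add_mod_right,
        Nat.mod_eq_of_lt hi.1]
    have hj' : u j ∈ verts (fun t => u ((t + (i + 1) % l) % l)) l := by
      rw [h.verts_rotate hsl]; exact mem_verts.2 ⟨j, hj.1, rfl⟩
    obtain ⟨k, hk, hkj⟩ := mem_verts.1 hj'
    have hkj' := h.inj _ (Nat.mod_lt _ (by omega)) _ hj.1 hkj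
    have hkl : k + 1 < l := by
      by_contra hcon
      rw [show k = l - 1 by omega, hlast] at hkj'
      exact hst (by rw [hkj'])
    have hsucc : (k + 1 + (i + 1) % l) % l = (j + 1) % l := by
      rw [← hkj', Nat.mod_add_mod]
      congr 1
      ring
    have := hr.dg_succ_add_le (k := k + 1) hx (by rwa [h.verts_rotate hsl]) hno (by omega) hkl
      (by simpa only [hlast] using hi.2) (by simpa only [Nat.add_sub_cancel, hkj'] using hj.2)
    rw [h.verts_rotate hsl] at this
    simpa only [hsucc, zero_add, Nat.mod_mod] using this
  have h1 := two_mul_sum_le (by omega) hpair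
  have h2 := dsum_union (G := G) (disjoint_sdiff.symm : Disjoint (C \ S) S)
  rw [sdiff_union_of_subset hSC] at h2
  have h4 : dsum G S (C \ S) + dsum G S S = ∑ s ∈ S, dg G C s := by
    unfold dsum
    rw [← sum_add_distrib]
    refine sum_congr rfl fun s _ => ?_
    rw [← dg_union disjoint_sdiff.symm, sdiff_union_of_subset hSC]
  have h5 := dsum_le (G := G) (C \ S)
  rw [card_sdiff_of_subset hSC, hScard, show #C = l from h.card_verts] at h5
  rw [hScard] at h1
  omega

/-! ### Counting the edges off the cycle -/

/-- Upper bound for the edges meeting a set `R`, where `F y` counts the edges from `y` to a fixed set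
outside `R`. Removing repeatedly the first vertex of a longest path of what is left of `R`, each step
removes at most `min (b + i) h` edges, `i + 1` being the number of remaining vertices. -/
lemma sum_add_dsum_le {F : V → ℕ} {b h : ℕ} (n : ℕ) : ∀ R : Finset V, #R = n →
    (∀ y ∈ R, F y ≤ b) → (∀ w p, PathIn G R w p → 1 ≤ p → F (w 0) + (p - 1) ≤ h) →
    2 * ∑ y ∈ R, F y + dsum G R R ≤ 2 * ∑ i ∈ range n, min (b + i) h := by
  induction n with
  | zero =>
    intro R hR _ _
    rw [card_eq_zero.1 hR]
    simp [dsum]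
  | succ n ih =>
    intro R hR hb hh
    obtain ⟨w, p, hp, hw, hnb⟩ := exists_longest_path (G := G) (card_pos.1 (by omega : 0 < #R))
    have hx : w 0 ∈ R := hw.mem 0 (by omega)
    have h1 := ih (R.erase (w 0)) (by rw [card_erase_of_mem hx]; omega)
      (fun y hy => hb y (mem_of_mem_erase hy))
      (fun w' p' hw' => hh w' p' (hw'.mono (erase_subset _ _)))
    have h2 := dg_le_of_path hw hp hnb
    have h3 := dg_le_pred (G := G) hx
    have h4 := hb _ hx
    have h5 := hh w p hw hp
    have h6 := dsum_erase (G := G) hx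
    have h7 := add_sum_erase _ F hx
    rw [sum_range_succ]
    have h8 : F (w 0) + dg G R (w 0) ≤ min (b + n) h := le_min (by omega) (by omega)
    omega

lemma sum_min_le_left (b h N : ℕ) :
    2 * ∑ i ∈ range N, min (b + i) h + N ≤ 2 * N * b + N * N := by
  induction N with
  | zero => simp
  | succ N ih =>
    rw [sum_range_succ]
    have := min_le_left (b + N) h
    nlinarith

lemma sum_min_le_right (b j N : ℕ) (hj : j ≤ N) :
    2 * ∑ i ∈ range N, min (b + i) (b + j) + j * (j + 1) ≤ 2 * N * (b + j) := by
  induction N, hj using Nat.le_induction with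
  | base =>
    have := sum_min_le_left b (b + j) j
    nlinarith
  | succ N _ ih =>
    rw [sum_range_succ]
    have := min_le_right (b + N) (b + j)
    nlinarith

/-! ### The upper bound -/

lemma HasCyc.mono {U' : Finset V} {m : ℕ} (h : HasCyc G U m) (hU : U ⊆ U') : HasCyc G U' m := by
  obtain ⟨u, hu⟩ := h
  exact ⟨u, hu.mono hU⟩

lemma exists_longest_cycle {m : ℕ} (h : ∃ l, m ≤ l ∧ HasCyc G U l) :
    ∃ l, m ≤ l ∧ HasCyc G U l ∧ ∀ l', l < l' → ¬ HasCyc G U l' := by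
  obtain ⟨l₀, hml, hl₀⟩ := h
  have hb : ∀ p, HasCyc G U p → p ≤ #U := fun p ⟨u, hu⟩ => hu.toPathIn.le_card
  refine ⟨Nat.findGreatest (HasCyc G U) #U, hml.trans (Nat.le_findGreatest (hb _ hl₀) hl₀),
    Nat.findGreatest_spec (hb _ hl₀) hl₀, fun l' hl' hcyc => ?_⟩
  have := Nat.le_findGreatest (hb _ hcyc) hcyc
  omega

/-- The edges of `U` split into those on the cycle, those leaving it and those avoiding it. -/
lemma PathIn.dsum_split (h : PathIn G U u p) :
    dsum G U U = dsum G (verts u p) (verts u p) + 2 * ∑ y ∈ U \ verts u p, dg G (verts u p) y +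
      dsum G (U \ verts u p) (U \ verts u p) := by
  have := dsum_union (G := G) (disjoint_sdiff : Disjoint (verts u p) (U \ verts u p))
  rwa [union_sdiff_of_subset h.verts_subset] at this

lemma PathIn.dg_split (h : PathIn G U u p) (y : V) :
    dg G U y = dg G (verts u p) y + dg G (U \ verts u p) y := by
  rw [← dg_union disjoint_sdiff, union_sdiff_of_subset h.verts_subset]

/-- If `C` is a longest cycle and fewer vertices than the minimum degree lie off `C`, then `C` is
either spanning or, as in Dirac's theorem for `2`-connected graphs, at least twice as long as the
minimum degree. -/
lemma CycIn.two_mul_minDegree_le {l D : ℕ} (h : CycIn G U u l)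
    (hlong : ∀ m, l < m → ¬ HasCyc G U m) (hdeg : ∀ v ∈ U, D ≤ dg G U v)
    (hR : (U \ verts u l).Nonempty) (hcard : #(U \ verts u l) + 1 ≤ D) : 2 * D ≤ l := by
  obtain ⟨w, p, hp, hw, hnb⟩ := exists_longest_path (G := G) hR
  have hmem : ∀ i < p, w i ∈ U ∧ w i ∉ verts u l := fun i hi => mem_sdiff.1 (hw.mem i hi)
  have h1 := dg_le_of_path hw hp hnb
  have h2 := hdeg _ (hmem 0 (by omega)).1
  have h3 := hdeg _ (hmem (p - 1) (by omega)).1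
  rw [h.dg_split] at h2 h3
  have h4 := dg_le_pred (G := G) (hw.mem (p - 1) (by omega))
  have h5 := hw.le_card
  have h6 := h.length_ge hlong (hw.mono sdiff_subset) hp (fun i hi => (hmem i hi).2)
    (by omega) (by omega)
  omega

/-- The case where a cycle of length at least `m = μ + 3` exists: a longest such cycle is so long
that the chord bounds leave too few edges. -/
lemma false_of_long_cycle {μ d : ℕ} (hcard : #U = μ + 3 + d) (hd : d ≤ μ)
    (hdeg : ∀ v ∈ U, d + 2 ≤ dg G U v) (hno : ¬ HasCyc G U (μ + 3))
    (hD : (μ + 2) * (μ + 1) + (d + 1) * (d + 2) < dsum G U U)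
    (hlong : ∃ l, μ + 3 ≤ l ∧ HasCyc G U l) : False := by
  obtain ⟨l, hml, ⟨u, hu⟩, hmax⟩ := exists_longest_cycle hlong
  have hq := card_sdiff_add_card_eq_card hu.verts_subset
  rw [hu.card_verts, hcard] at hq
  have h1 := hu.two_mul_dsum_le (by omega) hml hno
  have h2 : ∑ y ∈ U \ verts u l, 2 * dg G (verts u l) y ≤ ∑ y ∈ U \ verts u l, l := by
    refine sum_le_sum fun y hy => ?_
    rw [mem_sdiff] at hy
    exact hu.two_mul_dg_le hy.1 hy.2 (by omega) (by omega) hno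
  rw [← mul_sum, sum_const, smul_eq_mul] at h2
  have h3 := dsum_le (G := G) (U \ verts u l)
  have h4 := hu.dsum_split
  have h5 : (U \ verts u l).Nonempty → 2 * (d + 2) ≤ l := fun hne =>
    hu.two_mul_minDegree_le hmax hdeg hne (by omega)
  rw [← card_pos] at h5
  generalize #(U \ verts u l) = q at *
  obtain ⟨e, rfl⟩ := Nat.exists_eq_add_of_le hd
  rcases q with _ | q
  · obtain rfl : l = d + e + 3 + d := by omega
    simp only [zero_mul] at h2 h3
    nlinarith
  · have h6 := h5 (by omega)
    obtain ⟨f, rfl⟩ : ∃ f, e = q + 2 + f := ⟨e - (q + 2), by omega⟩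
    obtain rfl : l = 2 * d + 4 + f := by omega
    simp only [Nat.add_sub_cancel] at h3
    nlinarith

/-- The numerical estimate behind `false_of_short_cycle`. There `D` and `X` are twice the numbers of
edges spanned by a cycle of length `μ + 2` and of all other edges, `b` is the largest number of
neighbours on the cycle of an outside vertex, and `S` is the sum in `sum_add_dsum_le`. -/
lemma short_count {D X S b c j r d e μ : ℕ} (hr : μ + 2 = 2 * (b + j) + r)
    (he : b + j = d + 2 + e) (hc : b = 2 + c)
    (h3 : D ≤ (b + 2 * j + r) * (c + 1 + 2 * j + r) + b * (μ + 2)) (h4 : X ≤ 2 * S)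
    (h5 : j ≤ d + 1 → 2 * S + j * (j + 1) ≤ 2 * (d + 1) * (b + j))
    (h6 : 2 * S + (d + 1) ≤ 2 * (d + 1) * b + (d + 1) * (d + 1)) :
    D + X ≤ (μ + 2) * (μ + 1) + (d + 1) * (d + 2) := by
  obtain rfl : b = c + 2 := by omega
  obtain rfl : μ = 2 * (c + j + 1) + r := by omega
  rcases le_total j (d + 1) with hjd | hjd
  · have h7 := h5 hjd
    -- the slack of the count is `e * (e + 1) + 2 * j + b * r`
    have h8 : (d : ℤ) + e - j = c := by omega
    have h9 : (0 : ℤ) ≤ (d + e - j + 2) * r := by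
      rw [h8]; positivity
    have h10 : (0 : ℤ) ≤ e * (e + 1) := by positivity
    clear h5 h6
    zify at *
    have h11 : (e : ℤ) = c + j - d := by omega
    generalize (e : ℤ) = e at *
    subst h11
    nlinarith
  · obtain ⟨g, rfl⟩ := Nat.exists_eq_add_of_le hjd
    nlinarith [Nat.zero_le (c * g), Nat.zero_le (c * r), Nat.zero_le (c * c)]

/-- The case where a longest cycle has length `m - 1 = μ + 2`: the cycle spans few edges because of
the outside vertex with most neighbours on it, and the edges off the cycle are counted by
`sum_add_dsum_le`. -/
lemma false_of_short_cycle {μ d : ℕ} (hcard : #U = μ + 3 + d)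
    (hdeg : ∀ v ∈ U, d + 2 ≤ dg G U v)
    (hD : (μ + 2) * (μ + 1) + (d + 1) * (d + 2) < dsum G U U)
    (hmax : ∀ l, μ + 2 < l → ¬ HasCyc G U l) (hcyc : HasCyc G U (μ + 2)) : False := by
  obtain ⟨u, hu⟩ := hcyc
  have hq := card_sdiff_add_card_eq_card hu.verts_subset
  rw [hu.card_verts, hcard] at hq
  replace hq : #(U \ verts u (μ + 2)) = d + 1 := by omega
  have hne : (U \ verts u (μ + 2)).Nonempty := card_pos.1 (by omega)
  have h2 : ∀ y ∈ U \ verts u (μ + 2), 2 ≤ dg G (verts u (μ + 2)) y := by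
    intro y hy
    have h := hdeg y (mem_sdiff.1 hy).1
    have h' := dg_le_pred (G := G) hy
    rw [hu.dg_split] at h
    omega
  have hlen := hu.two_mul_minDegree_le hmax hdeg hne (by omega)
  have hpath : ∀ w p, PathIn G (U \ verts u (μ + 2)) w p → 1 ≤ p →
      dg G (verts u (μ + 2)) (w 0) + (p - 1) ≤ (μ + 2) / 2 := by
    intro w p hw hp
    have := hu.length_ge hmax (hw.mono sdiff_subset) hp
      (fun i hi => (mem_sdiff.1 (hw.mem i hi)).2)
      (by have := h2 _ (hw.mem (p - 1) (by omega)); omega) (h2 _ (hw.mem 0 (by omega)))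
    omega
  obtain ⟨x, hx, hxmax⟩ := exists_max_image _ (dg G (verts u (μ + 2))) hne
  set b := dg G (verts u (μ + 2)) x with hb
  have hb2 : 2 ≤ b := h2 x hx
  have hbh : b ≤ (μ + 2) / 2 := hpath (fun _ => x) 1 (PathIn.single hx) le_rfl
  have h3 := hu.dsum_le_of_outside (mem_sdiff.1 hx).1 (mem_sdiff.1 hx).2
    (hmax _ (by omega)) hb.symm hb2
  have h4 := sum_add_dsum_le (d + 1) _ hq hxmax hpath
  rw [hu.dsum_split] at hD
  obtain ⟨j, hj⟩ := Nat.exists_eq_add_of_le hbh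
  obtain ⟨r, hr⟩ : ∃ r, μ + 2 = 2 * (b + j) + r := ⟨μ + 2 - 2 * (b + j), by omega⟩
  obtain ⟨e, he⟩ : ∃ e, b + j = d + 2 + e := ⟨b + j - (d + 2), by omega⟩
  obtain ⟨c, hc⟩ := Nat.exists_eq_add_of_le hb2
  rw [show (μ + 2) - b = b + 2 * j + r by omega,
    show b + 2 * j + r - 1 = c + 1 + 2 * j + r by omega] at h3
  have h5 := short_count hr he hc h3 (hj ▸ h4) (sum_min_le_right b j (d + 1))
    (sum_min_le_left b (b + j) (d + 1))
  omega

/-- The upper bound, for all lengths `m = μ + 3`: on `m + d ≤ 2 m - 3` vertices, more than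
`C(m-1, 2) + C(d+2, 2)` edges force a cycle of length `m`. Edge numbers are doubled. -/
theorem hasCyc_of_dsum (n : ℕ) : ∀ (U : Finset V) (μ d : ℕ), #U = n → n = μ + 3 + d → d ≤ μ →
    (μ + 2) * (μ + 1) + (d + 1) * (d + 2) < dsum G U U → HasCyc G U (μ + 3) := by
  induction n with
  | zero => intro U μ d _ h; omega
  | succ n ih =>
    intro U μ d hU hn hd hD
    by_contra hno
    have hdeg : ∀ v ∈ U, d + 2 ≤ dg G U v := by
      intro v hv
      by_contra hlow
      have h1 := dsum_erase (G := G) hv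
      have h2 : #(U.erase v) = n := by rw [card_erase_of_mem hv]; omega
      rcases d with _ | d
      · have h3 := dsum_le (G := G) (U.erase v)
        rw [h2, show n = μ + 2 by omega, show μ + 2 - 1 = μ + 1 by omega] at h3
        omega
      · refine hno ((ih (U.erase v) μ d h2 (by omega) (by omega) ?_).mono (erase_subset _ _))
        nlinarith
    have hlong : ¬ ∃ l, μ + 3 ≤ l ∧ HasCyc G U l := fun h =>
      false_of_long_cycle (by omega) hd hdeg hno hD h
    have hlow : ∃ v ∈ U, dg G U v ≤ μ + 1 := by
      by_contra! hcon
      exact hlong (exists_cycle_of_minDegree (card_pos.1 (by omega)) (by omega)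
        fun v hv => by have := hcon v hv; omega)
    obtain ⟨v, hv, hvdeg⟩ := hlow
    have hvd := hdeg v hv
    obtain ⟨μ, rfl⟩ : ∃ ν, μ = ν + 1 := ⟨μ - 1, by omega⟩
    have h1 := dsum_erase (G := G) hv
    have hcyc := ih (U.erase v) μ d (by rw [card_erase_of_mem hv]; omega) (by omega) (by omega)
      (by nlinarith)
    exact false_of_short_cycle (by omega) hdeg hD (fun l hl hc => hlong ⟨l, by omega, hc⟩)
      (hcyc.mono (erase_subset _ _))


/-! ### Cycles as walks, and the number of edges -/

lemma CycIn.containsCycleLength (h : CycIn G U u p) : ContainsCycleLength G p := by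
  have h3 := h.three
  refine (cycleGraph_isContained_iff (by omega)).1 ⟨⟨⟨fun i => u i, fun {i j} hij => ?_⟩, ?_⟩⟩
  · have key : ∀ i j : Fin p, (i - j).val = 1 → G.Adj (u i) (u j) := by
      intro i j hij
      have hi := i.2
      have hj := j.2
      rcases le_or_gt j i with hle | hlt
      · rw [Fin.sub_val_of_le hle] at hij
        have hle' : (j : ℕ) ≤ i := hle
        rw [show (i : ℕ) = j + 1 by omega]
        exact (h.adj _ (by omega)).symm
      · rw [Fin.coe_sub_iff_lt.2 hlt] at hij
        rw [show (i : ℕ) = 0 by omega, show (j : ℕ) = p - 1 by omega]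
        exact h.close.symm
    rcases cycleGraph_adj'.1 hij with h | h
    · exact key _ _ h
    · exact (key _ _ h).symm
  · intro i j hij
    exact Fin.ext (h.inj _ i.2 _ j.2 hij)

lemma hasCyc_of_containsCycleLength [Fintype V] (h : ContainsCycleLength G p) :
    HasCyc G univ p := by
  obtain ⟨v, w, hw, rfl⟩ := h
  have h3 := hw.three_le_length
  refine ⟨w.getVert, ⟨fun i _ => mem_univ _, fun i hi j hj hij => ?_, fun i hi => ?_⟩, ?_, h3⟩
  · exact hw.getVert_injOn' (by simp only [Set.mem_ofPred_eq]; omega)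
      (by simp only [Set.mem_ofPred_eq]; omega) hij
  · exact w.adj_getVert_succ (by omega)
  · have := w.adj_getVert_succ (i := w.length - 1) (by omega)
    rw [show w.length - 1 + 1 = w.length by omega, w.getVert_length] at this
    simpa using this

lemma two_mul_edgeCount [Fintype V] (G : SimpleGraph V) :
    2 * edgeCount G = dsum G univ univ := by
  unfold edgeCount dsum dg
  rw [← coe_edgeFinset, Set.ncard_coe_finset, ← sum_degrees_eq_twice_card_edges]
  refine sum_congr rfl fun v _ => ?_
  rw [← card_neighborFinset_eq_degree, neighborFinset_eq_filter]

/-! ### The extremal graph -/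

/-- The graph on `n` vertices whose blocks are the clique on `0, …, q` and the clique on
`q, …, n - 1`; they share the vertex `q`. -/
def twoCliques (n q : ℕ) : SimpleGraph (Fin n) where
  Adj i j := i ≠ j ∧ (((i : ℕ) ≤ q ∧ (j : ℕ) ≤ q) ∨ (q ≤ (i : ℕ) ∧ q ≤ (j : ℕ)))
  symm := ⟨fun i j h => ⟨h.1.symm, by have := h.2; tauto⟩⟩
  loopless := ⟨fun i h => h.1 rfl⟩

/-- A cycle of `twoCliques n q` lies in one of the two cliques: a path avoiding the common vertex
`q` cannot change sides, and a cycle can be rotated to meet `q` at most in its first vertex. -/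
lemma twoCliques_not_hasCyc {n q p : ℕ} (hp : q + 1 < p) (hn : n < q + p) :
    ¬ HasCyc (twoCliques n q) univ p := by
  have main : ∀ u, CycIn (twoCliques n q) univ u p → ¬ ∀ i, 0 < i → i < p → (u i : ℕ) ≠ q := by
    intro u hu hq
    have h3 := hu.three
    have hinj : Set.InjOn (fun i => (u i : ℕ)) (Ico 1 p : Finset ℕ) := by
      intro i hi j hj hij
      rw [mem_coe, mem_Ico] at hi hj
      exact hu.inj i hi.2 j hj.2 (Fin.ext hij)
    rcases lt_or_ge (u 1 : ℕ) q with h1 | h1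
    · have hside : ∀ i, 1 ≤ i → i < p → (u i : ℕ) < q := by
        intro i hi
        induction i, hi using Nat.le_induction with
        | base => exact fun _ => h1
        | succ i hi ih =>
          intro hip
          have h4 := (hu.adj i hip).2
          have h5 := ih (by omega)
          have h6 := hq (i + 1) (by omega) hip
          omega
      have hle := card_le_card_of_injOn (t := range q) (fun i => (u i : ℕ))
        (fun i hi => by
          rw [mem_coe, mem_Ico] at hi
          exact mem_coe.2 (mem_range.2 (hside i hi.1 hi.2))) hinj
      simp only [Nat.card_Ico, card_range] at hle
      omega
    · have hside : ∀ i, 1 ≤ i → i < p → q < (u i : ℕ) := by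
        intro i hi
        induction i, hi using Nat.le_induction with
        | base => exact fun _ => lt_of_le_of_ne h1 (hq 1 (by omega) (by omega)).symm
        | succ i hi ih =>
          intro hip
          have h4 := (hu.adj i hip).2
          have h5 := ih (by omega)
          have h6 := hq (i + 1) (by omega) hip
          omega
      have hle := card_le_card_of_injOn (t := Ico (q + 1) n) (fun i => (u i : ℕ))
        (fun i hi => by
          rw [mem_coe, mem_Ico] at hi
          exact mem_coe.2 (mem_Ico.2 ⟨hside i hi.1 hi.2, (u i).2⟩)) hinj
      simp only [Nat.card_Ico] at hle
      omega
  rintro ⟨u, hu⟩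
  by_cases hq : ∃ s < p, (u s : ℕ) = q
  · obtain ⟨s, hs, hsq⟩ := hq
    obtain ⟨u', hu', -, h0⟩ := hu.exists_start (mem_verts.2 ⟨s, hs, rfl⟩)
    refine main u' hu' fun i hi hip hiq => ?_
    have := hu'.inj i hip 0 (by omega) (Fin.ext (by rw [hiq, h0, hsq]))
    omega
  · exact main u hu fun i _ hip hiq => hq ⟨i, hip, hiq⟩

/-- A lower bound for twice the number of edges of `twoCliques (q + r) q`, as the cliques have
`q + 1` and `r` vertices. -/
lemma le_dsum_twoCliques (q r : ℕ) (hr : 1 ≤ r) :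
    (q + 1) * q + r * (r - 1) ≤ dsum (twoCliques (q + r) q) univ univ := by
  set A : Finset (Fin (q + r)) := univ.filter fun i => (i : ℕ) < q with hA
  set B : Finset (Fin (q + r)) := univ.filter fun i => q ≤ (i : ℕ) with hB
  have hdisj : Disjoint A B := by
    rw [Finset.disjoint_left]
    intro i hi hj
    simp only [hA, hB, mem_filter] at hi hj
    omega
  have hAB : A ∪ B = univ := by
    ext i
    simp only [hA, hB, mem_union, mem_filter, mem_univ, true_and, iff_true]
    omega
  have hcardA : #A = q := by
    have := Fin.card_filter_val_lt (n := q + r) (m := q)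
    rw [hA, this]; omega
  have hcard := card_union_of_disjoint hdisj
  rw [hAB, card_univ, Fintype.card_fin] at hcard
  have hcardB : #B = r := by omega
  have clique : ∀ C : Finset (Fin (q + r)),
      (∀ i ∈ C, ∀ j ∈ C, i ≠ j → (twoCliques (q + r) q).Adj i j) →
      ∀ i ∈ C, #C - 1 ≤ dg (twoCliques (q + r) q) C i := by
    intro C hC i hi
    rw [← card_erase_of_mem hi]
    refine card_le_card fun j hj => ?_
    rw [mem_erase] at hj
    exact mem_filter.2 ⟨hj.2, hC i hi j hj.2 hj.1.symm⟩
  have hAA : q * (q - 1) ≤ dsum (twoCliques (q + r) q) A A := by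
    have := card_nsmul_le_sum A _ _ (clique A fun i hi j hj hij =>
      ⟨hij, Or.inl (by simp only [hA, mem_filter] at hi hj; omega)⟩)
    rwa [hcardA, smul_eq_mul] at this
  have hBB : r * (r - 1) ≤ dsum (twoCliques (q + r) q) B B := by
    have := card_nsmul_le_sum B _ _ (clique B fun i hi j hj hij =>
      ⟨hij, Or.inr (by simp only [hB, mem_filter] at hi hj; omega)⟩)
    rwa [hcardB, smul_eq_mul] at this
  have hBA : q ≤ dsum (twoCliques (q + r) q) B A := by
    have hmem : (⟨q, by omega⟩ : Fin (q + r)) ∈ B := mem_filter.2 ⟨mem_univ _, le_rfl⟩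
    refine le_trans ?_ (single_le_sum (fun _ _ => Nat.zero_le _) hmem)
    unfold dg
    rw [filter_true_of_mem, hcardA]
    intro i hi
    have hi' := (mem_filter.1 hi).2
    exact ⟨fun h => by rw [← h] at hi'; exact lt_irrefl _ hi', Or.inl ⟨le_rfl, hi'.le⟩⟩
  have hsum : dsum (twoCliques (q + r) q) univ univ = dsum (twoCliques (q + r) q) A A +
      2 * dsum (twoCliques (q + r) q) B A + dsum (twoCliques (q + r) q) B B := by
    rw [← hAB]
    convert dsum_union hdisj
  rw [hsum]
  rcases q with _ | q
  · omega
  · rw [Nat.add_sub_cancel] at hAA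
    nlinarith

end Aux

/-- For `k ≥ 2` and `2k+1 ≤ n ≤ 4k-1`, writing `n = (s-1)(2k-1) + r` with `s ≥ 1`,
`2 ≤ r ≤ 2k`, we have `ex(n; C_{2k+1}) = g(n,k) = (s-1)·C(2k,2) + C(r,2)`. -/
theorem ex_middle (k n s r : ℕ) (hk : 2 ≤ k) (hn1 : 2 * k + 1 ≤ n) (hn2 : n ≤ 4 * k - 1)
    (hs : 1 ≤ s) (hr2 : 2 ≤ r) (hr : r ≤ 2 * k) (hrep : n = (s - 1) * (2 * k - 1) + r) :
    exC n k = (s - 1) * Nat.choose (2 * k) 2 + Nat.choose r 2 := by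
  obtain ⟨q, rfl⟩ : ∃ q, s = q + 1 := ⟨s - 1, by omega⟩
  obtain ⟨κ, rfl⟩ : ∃ κ, k = κ + 2 := ⟨k - 2, by omega⟩
  obtain ⟨d, rfl⟩ : ∃ d, r = d + 2 := ⟨r - 2, by omega⟩
  rw [Nat.add_sub_cancel, show 2 * (κ + 2) - 1 = 2 * κ + 3 by omega] at hrep
  -- the range of `n` leaves only two cliques
  obtain rfl : q = 1 := by
    rcases q with _ | _ | q
    · omega
    · rfl
    · have : n ≤ 4 * κ + 7 := by omega
      nlinarith [Nat.zero_le (q * κ)]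
  rw [one_mul] at hrep
  have e1 : (2 * κ + 4) * (2 * κ + 3) = 2 * Nat.choose (2 * (κ + 2)) 2 := by
    have := Nat.add_one_mul_choose_eq (2 * κ + 3) 1
    rw [Nat.choose_one_right] at this
    rw [this, mul_comm]
    rfl
  have e2 : (d + 1) * (d + 2) = 2 * Nat.choose (d + 2) 2 := by
    have := Nat.add_one_mul_choose_eq (d + 1) 1
    rw [Nat.choose_one_right] at this
    rw [mul_comm, this, mul_comm]
  rw [Nat.add_sub_cancel, one_mul]
  have upper : ∀ G : SimpleGraph (Fin n), ¬ ContainsCycleLength G (2 * (κ + 2) + 1) →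
      edgeCount G ≤ Nat.choose (2 * (κ + 2)) 2 + Nat.choose (d + 2) 2 := by
    intro G hG
    by_contra hlt
    have h2 := two_mul_edgeCount G
    obtain ⟨u, hu⟩ := hasCyc_of_dsum (G := G) n Finset.univ (2 * κ + 2) d (by simp) (by omega)
      (by omega) (by change (2 * κ + 4) * (2 * κ + 3) + _ < _; omega)
    exact hG hu.containsCycleLength
  refine le_antisymm (csSup_le ?_ ?_) ?_
  · exact ⟨_, twoCliques n (2 * κ + 3), fun h => twoCliques_not_hasCyc (by omega) (by omega)
      (hasCyc_of_containsCycleLength h), rfl⟩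
  · rintro m ⟨G, hG, rfl⟩
    exact upper G hG
  · have hlow : Nat.choose (2 * (κ + 2)) 2 + Nat.choose (d + 2) 2
        ≤ edgeCount (twoCliques n (2 * κ + 3)) := by
      have h1 := two_mul_edgeCount (twoCliques n (2 * κ + 3))
      subst hrep
      have h2 := le_dsum_twoCliques (2 * κ + 3) (d + 2) (by omega)
      rw [show d + 2 - 1 = d + 1 by omega, mul_comm (d + 2)] at h2
      rw [show 2 * κ + 3 + 1 = 2 * κ + 4 by rfl] at h2
      omega
    refine hlow.trans (le_csSup ⟨Nat.choose (2 * (κ + 2)) 2 + Nat.choose (d + 2) 2, ?_⟩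
      ⟨twoCliques n (2 * κ + 3), fun h =>
        twoCliques_not_hasCyc (by omega) (by omega) (hasCyc_of_containsCycleLength h), rfl⟩)
    rintro m ⟨G, hG, rfl⟩
    exact upper G hG
end

section
/- For every integer k ≥ 2 and every integer n ≥ 4k-2, the maximum number of edges in a simple graph on n vertices containing no cycle of length 2k+1 as a subgraph equals ⌊n²/4⌋. -/
/-!
The lower bound is the balanced complete bipartite graph, which has no odd cycle. For the upper
bound, every graph on `n ≥ 2l - 4` vertices (`l ≥ 3`, `n ≥ 2`) with more than `n² / 4` edges
contains a cycle of length `l` (`hasCyc_of_dense`); `l = 2k + 1` gives the theorem. The proof is an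
induction on `l` and `n`, resting on the following facts.

* Bondy (`Cyc.pancyclic`): more than `c² / 4` edges and a Hamilton cycle on `c` vertices force
  cycles of all lengths `3, …, c`.
* If a longest cycle `C` covers more than half of the vertices but not all of them, some vertex off
  `C` has degree at most half the order (`Cyc.exists_deg_le_half`). Deleting such vertices one by
  one preserves density and ends at `C` itself, where Bondy's theorem applies
  (`Cyc.dense_image`).
* Woodall (`Cyc.E2_le`): a graph on `c + r` vertices with circumference `c` has at most
  `c (c - 1) / 2 + r (r + 1) / 2` edges.

A vertex of degree at most `n / 2` can be deleted as long as `n > 2l - 4`. If there is none, a path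
argument gives a cycle on more than half of the vertices, and the second fact finishes. There
remains the order `n = 2l - 4`: the induction hypothesis provides a cycle of length `l - 1`. If the
circumference is at least `l`, the second fact applies again; if it is exactly `l - 1`, Woodall's
bound with `c = n / 2 + 1` and `r = n / 2 - 1` says that there are at most `n² / 4` edges.

For Woodall's bound, vertices off `C` of degree at most `r` are deleted. If all others have larger
degree, take a vertex `v` off `C` and a longest path off `C` starting at `v`, with end `w` and `q`
vertices. Its end has at least `r + 2 - q` neighbours on `C`, and since `C` cannot be lengthened by
rerouting it through the path and at most one chord, the two successors on `C` of each neighbour of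
`v` miss many vertices of `C` (`Cyc.miss_bounds`). Summing (`Cyc.mul_le_miss`), the edges that
meet vertices off `C` are paid for by the missing chords of `C`.

A cycle is unrolled to a periodic function `f : ℕ → V` (`Cyc`), so that arcs are images of
intervals and rotations are translations. Edges are counted through the degree sum `E2`, which is
twice their number.
-/

open SimpleGraph

namespace OddCycleTuran

open Finset

open scoped Classical

variable {V : Type*} {G : SimpleGraph V}

/-! ### Cycles and paths as vertex lists -/

/-- `l` is a cyclically consecutive-adjacent list of `L` distinct vertices of `S`. For `L ≥ 3`
this is a cycle of length `L` in `G[S]`; the degenerate lengths `L ≤ 2` are allowed as well, since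
only upper bounds `L ≤ c` with `3 ≤ c` are ever derived from them. -/
def HasCyc (G : SimpleGraph V) (S : Finset V) (L : ℕ) : Prop :=
  ∃ l : List V, l.length = L ∧ l.Nodup ∧ (∀ x ∈ l, x ∈ S) ∧ l.IsChain G.Adj ∧
    ∀ x ∈ l.getLast?, ∀ y ∈ l.head?, G.Adj x y

/-- `p` lists the vertices of a path of `G[R]` from `u` to `w`. -/
structure IsPth (G : SimpleGraph V) (R : Finset V) (u w : V) (p : List V) : Prop where
  head : p.head? = some u
  last : p.getLast? = some w
  nodup : p.Nodup
  sub : ∀ x ∈ p, x ∈ R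
  chain : p.IsChain G.Adj

/-- A cycle of length `c`, unrolled to a `c`-periodic sequence of vertices. -/
structure Cyc (G : SimpleGraph V) (f : ℕ → V) (c : ℕ) : Prop where
  three : 3 ≤ c
  per : ∀ t, f (t + c) = f t
  adj : ∀ t, G.Adj (f t) (f (t + 1))
  inj : ∀ s t, s < t → t < s + c → f s ≠ f t

/-- The number of neighbours of `v` in `S`. -/
noncomputable def deg (G : SimpleGraph V) (S : Finset V) (v : V) : ℕ := #{x ∈ S | G.Adj v x}

/-- The degree sum of `G[S]`, i.e. twice its number of edges. -/
noncomputable def E2 (G : SimpleGraph V) (S : Finset V) : ℕ := ∑ v ∈ S, deg G S v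

/-- The consecutive vertices `f a, …, f (a + m - 1)`. -/
def seg (f : ℕ → V) (a m : ℕ) : List V := (List.range' a m).map f

lemma HasCyc.mono {S T : Finset V} {L : ℕ} (h : HasCyc G S L) (hST : S ⊆ T) : HasCyc G T L := by
  obtain ⟨l, h1, h2, h3, h4⟩ := h
  exact ⟨l, h1, h2, fun x hx => hST (h3 x hx), h4⟩

lemma HasCyc.le_card {S : Finset V} {L : ℕ} (h : HasCyc G S L) : L ≤ #S := by
  obtain ⟨l, h1, h2, h3, -⟩ := h
  rw [← h1, ← List.toFinset_card_of_nodup h2]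
  exact card_le_card fun x hx => h3 x (by simpa using hx)

lemma HasCyc.contains {S : Finset V} {L : ℕ} (h : HasCyc G S L) (hL : 3 ≤ L) :
    ContainsCycleLength G L := by
  obtain ⟨l, h1, h2, -, h4, h5⟩ := h
  have hne : l ≠ [] := by rintro rfl; simp at h1; omega
  have hadj : G.Adj (l.getLast hne) (l.head hne) :=
    h5 _ (by simp [List.getLast?_eq_some_getLast hne]) _ (by simp [List.head?_eq_some_head hne])
  refine ⟨_, Walk.cons hadj (Walk.ofSupport l hne h4), ?_, ?_⟩
  · rw [Walk.isCycle_iff_isPath_tail_and_le_length]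
    constructor
    · simp [Walk.isPath_def, h2]
    · simp; omega
  · simp; omega

lemma IsPth.reverse {R : Finset V} {u w : V} {p : List V} (h : IsPth G R u w p) :
    IsPth G R w u p.reverse :=
  ⟨by simpa using h.last, by simpa using h.head, by simpa using h.nodup,
    by simpa using h.sub, by
      rw [List.isChain_reverse]; exact h.chain.imp fun _ _ hab => hab.symm⟩

lemma IsPth.head_mem {R : Finset V} {u w : V} {p : List V} (h : IsPth G R u w p) : u ∈ p :=
  List.mem_of_head? h.head

lemma IsPth.last_mem {R : Finset V} {u w : V} {p : List V} (h : IsPth G R u w p) : w ∈ p :=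
  List.mem_of_getLast? h.last

lemma IsPth.length_le {R : Finset V} {u w : V} {p : List V} (h : IsPth G R u w p) :
    p.length ≤ #R := by
  rw [← List.toFinset_card_of_nodup h.nodup]
  exact card_le_card fun x hx => h.sub x (by simpa using hx)

lemma IsPth.length_pos {R : Finset V} {u w : V} {p : List V} (h : IsPth G R u w p) :
    0 < p.length := List.length_pos_of_mem h.head_mem

lemma IsPth.snoc {R : Finset V} {u w z : V} {p : List V} (h : IsPth G R u w p) (hz : z ∈ R)
    (hzp : z ∉ p) (hwz : G.Adj w z) : IsPth G R u z (p ++ [z]) where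
  head := by simp [h.head]
  last := by simp
  nodup := by
    rw [List.nodup_append]
    exact ⟨h.nodup, by simp, by rintro a ha b hb rfl; simp at hb; subst hb; exact hzp ha⟩
  sub := by
    intro x hx
    rcases List.mem_append.1 hx with hx | hx
    · exact h.sub x hx
    · simp at hx; subst hx; exact hz
  chain := by
    refine List.isChain_append.2 ⟨h.chain, by simp, ?_⟩
    simp [h.last, hwz]

lemma IsPth.singleton {R : Finset V} {v : V} (hv : v ∈ R) : IsPth G R v v [v] :=
  ⟨rfl, rfl, by simp, by simpa using hv, by simp⟩

lemma deg_le_of_subset_path {R : Finset V} {u w : V} {p : List V} (h : IsPth G R u w p)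
    (hn : ∀ z ∈ R, G.Adj w z → z ∈ p) : deg G R w + 1 ≤ p.length := by
  have : {x ∈ R | G.Adj w x} ⊆ p.toFinset.erase w := by
    intro x hx
    simp only [mem_filter] at hx
    simp only [mem_erase, List.mem_toFinset]
    exact ⟨hx.2.ne', hn x hx.1 hx.2⟩
  have h2 := card_le_card this
  rw [card_erase_of_mem (by simpa using h.last_mem), List.toFinset_card_of_nodup h.nodup] at h2
  have := h.length_pos
  unfold deg; omega

/-- The end `w` of a longest path starting at `v` has all its neighbours on that path, hence fewer
of them than the path has vertices. -/
lemma exists_longest_from {R : Finset V} {v : V} (hv : v ∈ R) :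
    ∃ w p, IsPth G R v w p ∧ deg G R w + 1 ≤ p.length := by
  obtain ⟨p, ⟨w, hp⟩, hmax⟩ : ∃ p, (∃ w, IsPth G R v w p) ∧
      ∀ p', (∃ w, IsPth G R v w p') → p'.length ≤ p.length := by
    have hb : ∃ n p, (∃ w, IsPth G R v w p) ∧ p.length = n := ⟨1, [v], ⟨v, .singleton hv⟩, rfl⟩
    have hbd : ∀ n, (∃ p, (∃ w, IsPth G R v w p) ∧ p.length = n) → n ≤ #R := by
      rintro n ⟨p, ⟨w, hp⟩, rfl⟩; exact hp.length_le
    obtain ⟨p, h1, h2⟩ := Nat.findGreatest_spec (P := fun n => ∃ p, (∃ w, IsPth G R v w p) ∧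
      p.length = n) (hbd _ hb.choose_spec) hb.choose_spec
    exact ⟨p, h1, fun p' hp' => h2 ▸ Nat.le_findGreatest (hbd _ ⟨p', hp', rfl⟩) ⟨p', hp', rfl⟩⟩
  refine ⟨w, p, hp, deg_le_of_subset_path hp fun z hz hwz => ?_⟩
  by_contra hzp
  have := hmax _ ⟨z, hp.snoc hz hzp hwz⟩
  simp at this

/-- A longest path; all neighbours of its two ends lie on it. -/
lemma exists_longest {R : Finset V} (hR : R.Nonempty) :
    ∃ u w p, IsPth G R u w p ∧ (∀ z ∈ R, G.Adj u z → z ∈ p) ∧ (∀ z ∈ R, G.Adj w z → z ∈ p) := by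
  obtain ⟨v, hv⟩ := hR
  obtain ⟨p, ⟨u, w, hp⟩, hmax⟩ : ∃ p, (∃ u w, IsPth G R u w p) ∧
      ∀ p', (∃ u w, IsPth G R u w p') → p'.length ≤ p.length := by
    have hb : ∃ n p, (∃ u w, IsPth G R u w p) ∧ p.length = n :=
      ⟨1, [v], ⟨v, v, .singleton hv⟩, rfl⟩
    have hbd : ∀ n, (∃ p, (∃ u w, IsPth G R u w p) ∧ p.length = n) → n ≤ #R := by
      rintro n ⟨p, ⟨u, w, hp⟩, rfl⟩; exact hp.length_le
    obtain ⟨p, h1, h2⟩ := Nat.findGreatest_spec (P := fun n => ∃ p, (∃ u w, IsPth G R u w p) ∧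
      p.length = n) (hbd _ hb.choose_spec) hb.choose_spec
    exact ⟨p, h1, fun p' hp' => h2 ▸ Nat.le_findGreatest (hbd _ ⟨p', hp', rfl⟩) ⟨p', hp', rfl⟩⟩
  have key : ∀ {u w : V} {q : List V}, IsPth G R u w q → q.length = p.length →
      ∀ z ∈ R, G.Adj w z → z ∈ q := by
    intro u w q hq hl z hz hwz
    by_contra hzp
    have := hmax _ ⟨u, z, hq.snoc hz hzp hwz⟩
    simp at this; omega
  exact ⟨u, w, p, hp, fun z hz h => by simpa using key hp.reverse (by simp) z hz h,
    key hp rfl⟩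

@[simp] lemma length_seg (f : ℕ → V) (a m : ℕ) : (seg f a m).length = m := by simp [seg]

lemma mem_seg {f : ℕ → V} {a m : ℕ} {x : V} :
    x ∈ seg f a m ↔ ∃ t, a ≤ t ∧ t < a + m ∧ f t = x := by
  simp only [seg, List.mem_map, List.mem_range'_1]; tauto

lemma head_seg (f : ℕ → V) (a m : ℕ) (hm : 0 < m) : (seg f a m).head? = some (f a) := by
  obtain ⟨m, rfl⟩ := Nat.exists_eq_succ_of_ne_zero hm.ne'
  simp [seg, List.range'_succ]

lemma last_seg (f : ℕ → V) (a m : ℕ) : (seg f a (m + 1)).getLast? = some (f (a + m)) := by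
  simp [seg, List.range'_concat]

namespace Cyc

variable {f : ℕ → V} {c : ℕ}

lemma chain_seg (hf : Cyc G f c) (a m : ℕ) : (seg f a m).IsChain G.Adj := by
  induction m with
  | zero => simp [seg]
  | succ m ih =>
    have : seg f a (m + 1) = seg f a m ++ [f (a + m)] := by simp [seg, List.range'_concat]
    rw [this, List.isChain_append]
    refine ⟨ih, by simp, ?_⟩
    rcases m with _ | m
    · simp [seg]
    · rw [last_seg]; simpa [Nat.add_assoc] using hf.adj (a + m)

lemma ne_of_lt (hf : Cyc G f c) {s t : ℕ} (h : s ≠ t) (h1 : s < t + c) (h2 : t < s + c) :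
    f s ≠ f t := by
  rcases lt_or_gt_of_ne h with h | h
  · exact hf.inj _ _ h h2
  · exact (hf.inj _ _ h h1).symm

lemma nodup_seg (hf : Cyc G f c) (a m : ℕ) (hm : m ≤ c) : (seg f a m).Nodup := by
  refine List.Nodup.map_on ?_ List.nodup_range'
  intro x hx y hy hxy
  rw [List.mem_range'_1] at hx hy
  by_contra hne
  exact hf.ne_of_lt hne (by omega) (by omega) hxy

end Cyc

/-- Every list cycle of length at least three can be unrolled. -/
lemma HasCyc.unroll {S : Finset V} {c : ℕ} (h : HasCyc G S c) (hc : 3 ≤ c) :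
    ∃ f, Cyc G f c ∧ ∀ t, f t ∈ S := by
  obtain ⟨l, h1, h2, h3, h4, h5⟩ := h
  have hlt : ∀ t, t % c < l.length := fun t => h1 ▸ Nat.mod_lt _ (by omega)
  refine ⟨fun t => l[t % c]'(hlt t), ⟨hc, ?_, ?_, ?_⟩, fun t => h3 _ (List.getElem_mem _)⟩
  · intro t; simp
  · intro t
    have hne : l ≠ [] := by rintro rfl; simp at h1; omega
    by_cases ht : t % c + 1 < c
    · have h6 : (t + 1) % c = t % c + 1 := by
        rw [Nat.add_mod, Nat.mod_eq_of_lt (show 1 < c by omega), Nat.mod_eq_of_lt ht]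
      simp only [h6]
      exact List.isChain_iff_getElem.1 h4 _ (by omega)
    · have h7 : t % c = c - 1 := by have := Nat.mod_lt t (show 0 < c by omega); omega
      have h6 : (t + 1) % c = 0 := by
        rw [Nat.add_mod, h7, Nat.mod_eq_of_lt (show 1 < c by omega),
          show c - 1 + 1 = c by omega, Nat.mod_self]
      simp only [h6, h7]
      refine h5 _ ?_ _ ?_
      · rw [List.getLast?_eq_getElem?, h1]; simp
      · rw [List.head?_eq_getElem?]; simp
  · intro s t hst hts heq
    have := (h2.getElem_inj_iff).1 heq
    have h8 := Nat.div_add_mod s c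
    have h9 := Nat.div_add_mod t c
    have h10 : c * (s / c) < c * (t / c) := by omega
    have h11 : s / c + 1 ≤ t / c := Nat.lt_of_mul_lt_mul_left h10
    have := Nat.mul_le_mul_left c h11
    rw [Nat.mul_add] at this
    omega

/-! ### Rerouting a cycle through an external path -/

namespace Cyc

variable {f : ℕ → V} {c : ℕ}

/-- Replacing the arc from `f i` to `f (i + g)` by an external path. -/
lemma detour (hf : Cyc G f c) {S R : Finset V} (hfS : ∀ t, f t ∈ S) (hRS : R ⊆ S)
    (hfR : ∀ t, f t ∉ R) {u w : V} {p : List V} (hp : IsPth G R u w p) {i g : ℕ} (hg : 1 ≤ g)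
    (hgc : g ≤ c) (hu : G.Adj u (f i)) (hw : G.Adj w (f (i + g))) :
    HasCyc G S (p.length + (c - g + 1)) := by
  refine ⟨p ++ seg f (i + g) (c - g + 1), by simp, ?_, ?_, ?_, ?_⟩
  · rw [List.nodup_append']
    refine ⟨hp.nodup, hf.nodup_seg _ _ (by omega), ?_⟩
    intro x hx hx2
    obtain ⟨t, -, -, rfl⟩ := mem_seg.1 hx2
    exact hfR t (hp.sub _ hx)
  · intro x hx
    rcases List.mem_append.1 hx with hx | hx
    · exact hRS (hp.sub x hx)
    · obtain ⟨t, -, -, rfl⟩ := mem_seg.1 hx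
      exact hfS t
  · refine List.isChain_append.2 ⟨hp.chain, hf.chain_seg _ _, ?_⟩
    rw [hp.last, head_seg _ _ _ (by omega)]
    simpa using hw
  · have h1 : f (i + g + (c - g)) = f i := by rw [← hf.per i]; congr 1; omega
    simp only [List.getLast?_append, List.head?_append, last_seg, hp.head, h1]
    simpa using hu.symm

/-- Replacing the arcs `f i … f (i + a)` and `f (i + g) … f (i + g + b)` by the chord
`f (i + a) f (i + g + b)` and an external path from `f i` to `f (i + g)`. -/
lemma detour_chord (hf : Cyc G f c) {S R : Finset V} (hfS : ∀ t, f t ∈ S) (hRS : R ⊆ S)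
    (hfR : ∀ t, f t ∉ R) {u w : V} {p : List V} (hp : IsPth G R u w p) {i g a b : ℕ}
    (ha : 1 ≤ a) (hag : a ≤ g) (hb : 1 ≤ b) (hgc : g + b ≤ c)
    (hu : G.Adj u (f i)) (hw : G.Adj w (f (i + g)))
    (hab : G.Adj (f (i + a)) (f (i + g + b))) :
    HasCyc G S (p.length + (g - a + 1) + (c - g - b + 1)) := by
  refine ⟨(p ++ (seg f (i + a) (g - a + 1)).reverse) ++ seg f (i + g + b) (c - g - b + 1),
    by simp; omega, ?_, ?_, ?_, ?_⟩
  · rw [List.nodup_append', List.nodup_append', List.nodup_reverse]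
    refine ⟨⟨hp.nodup, hf.nodup_seg _ _ (by omega), ?_⟩, hf.nodup_seg _ _ (by omega), ?_⟩
    · intro x hx hx2
      obtain ⟨t, -, -, rfl⟩ := mem_seg.1 (List.mem_reverse.1 hx2)
      exact hfR t (hp.sub _ hx)
    · intro x hx hx2
      obtain ⟨t, h1, h2, rfl⟩ := mem_seg.1 hx2
      rcases List.mem_append.1 hx with hx | hx
      · exact hfR t (hp.sub _ hx)
      · obtain ⟨s, h3, h4, h5⟩ := mem_seg.1 (List.mem_reverse.1 hx)
        exact hf.inj s t (by omega) (by omega) h5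
  · intro x hx
    rcases List.mem_append.1 hx with hx | hx
    · rcases List.mem_append.1 hx with hx | hx
      · exact hRS (hp.sub x hx)
      · obtain ⟨t, -, -, rfl⟩ := mem_seg.1 (List.mem_reverse.1 hx)
        exact hfS t
    · obtain ⟨t, -, -, rfl⟩ := mem_seg.1 hx
      exact hfS t
  · refine List.isChain_append.2 ⟨List.isChain_append.2 ⟨hp.chain, ?_, ?_⟩, hf.chain_seg _ _, ?_⟩
    · rw [List.isChain_reverse]; exact (hf.chain_seg _ _).imp fun _ _ h => h.symm
    · rw [hp.last, List.head?_reverse, last_seg, show i + a + (g - a) = i + g by omega]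
      simpa using hw
    · rw [List.getLast?_append, List.getLast?_reverse, head_seg _ _ _ (by omega),
        head_seg _ _ _ (by omega)]
      simpa using hab
  · have h1 : f (i + g + b + (c - g - b)) = f i := by rw [← hf.per i]; congr 1; omega
    simp only [List.getLast?_append, List.head?_append, last_seg, hp.head, h1]
    simpa using hu.symm

/-- The number of neighbours of `x` on the cycle. -/
noncomputable def nbr (G : SimpleGraph V) (f : ℕ → V) (c : ℕ) (x : V) : ℕ :=
  #{s ∈ Ico 0 c | G.Adj x (f s)}

lemma nbr_window (hf : Cyc G f c) (a i : ℕ) (x : V) :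
    #{s ∈ Ico a (a + c) | G.Adj x (f (i + s))} = nbr G f c x := by
  have hper : Function.Periodic (fun s => G.Adj x (f s)) c := fun t => by simp [hf.per t]
  have hper' : Function.Periodic (fun s => G.Adj x (f (i + s))) c := fun t => by
    simp [← Nat.add_assoc, hf.per]
  have h1 := Nat.filter_Ico_card_eq_of_periodic 0 c _ hper
  have h2 := Nat.filter_Ico_card_eq_of_periodic i c _ hper
  have h3 := Nat.filter_Ico_card_eq_of_periodic 0 c _ hper'
  have h4 := Nat.filter_Ico_card_eq_of_periodic a c _ hper'
  rw [h4, ← h3]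
  unfold nbr
  rw [show Ico 0 c = Ico 0 (0 + c) by simp, h1, ← h2]
  refine card_bij (fun s _ => i + s) ?_ ?_ ?_
  · intro s hs; simp only [mem_filter, mem_Ico] at hs ⊢; exact ⟨by omega, hs.2⟩
  · intro s _ t _ h; simpa using h
  · intro t ht
    simp only [mem_filter, mem_Ico] at ht
    refine ⟨t - i, ?_, by omega⟩
    simp only [mem_filter, mem_Ico]
    exact ⟨by omega, by rw [show i + (t - i) = t by omega]; exact ht.2⟩

lemma image_card (hf : Cyc G f c) : #((range c).image f) = c := by
  rw [card_image_of_injOn, card_range]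
  intro s hs t ht h
  simp only [coe_range, Set.mem_Iio] at hs ht
  by_contra hne
  exact hf.ne_of_lt hne (by omega) (by omega) h

lemma mem_image (hf : Cyc G f c) (t : ℕ) : f t ∈ (range c).image f := by
  have h3 := hf.three
  refine mem_image_of_mem f (a := t % c) (mem_range.2 (Nat.mod_lt _ (by omega))) |> (?_ : _ → _)
  have : ∀ k s, f (s + c * k) = f s := by
    intro k s
    induction k with
    | zero => simp
    | succ k ih => rw [Nat.mul_succ, ← Nat.add_assoc, hf.per, ih]
  rw [show f (t % c) = f t by rw [← this (t / c) (t % c), Nat.mod_add_div]]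
  exact id

lemma deg_image (hf : Cyc G f c) (x : V) : deg G ((range c).image f) x = nbr G f c x := by
  unfold deg nbr
  rw [filter_image, card_image_of_injOn]
  · simp
  · intro s hs t ht h
    simp only [coe_filter, mem_range, Set.mem_ofPred_eq] at hs ht
    by_contra hne
    exact hf.ne_of_lt hne (by omega) (by omega) h

/-! ### Dense graphs with a spanning cycle -/

/-- If `C_ℓ` is missing, two consecutive vertices of a cycle of length `c ≥ ℓ` have together at
most `c` neighbours on it: each neighbour `f (i + j)` of `f i` forbids one neighbour
`f (i + j')` of `f (i + 1)`. -/
lemma nbr_add_le (hf : Cyc G f c) {S : Finset V} (hfS : ∀ t, f t ∈ S) {l : ℕ} (hl : 3 ≤ l)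
    (hlc : l ≤ c) (hno : ¬ HasCyc G S l) (i : ℕ) :
    nbr G f c (f i) + nbr G f c (f (i + 1)) ≤ c := by
  set A := {j ∈ Ico 2 c | G.Adj (f i) (f (i + j))} with hA
  set B := {j ∈ Ico 2 c | G.Adj (f (i + 1)) (f (i + j))} with hB
  have hA1 : nbr G f c (f i) ≤ #A + 1 := by
    rw [← hf.nbr_window 0 i, ← card_singleton 1]
    refine (card_le_card ?_).trans (card_union_le _ _)
    intro j hj
    simp only [mem_filter, mem_Ico, mem_union, mem_singleton, hA] at hj ⊢
    rcases Nat.eq_zero_or_pos j with rfl | h0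
    · simp at hj
    · by_cases h1 : j = 1
      · exact .inr h1
      · exact .inl ⟨by omega, hj.2⟩
  have hB1 : nbr G f c (f (i + 1)) ≤ #B + 1 := by
    rw [← hf.nbr_window 0 i, ← card_singleton 0]
    refine (card_le_card ?_).trans (card_union_le _ _)
    intro j hj
    simp only [mem_filter, mem_Ico, mem_union, mem_singleton, hB] at hj ⊢
    by_cases h1 : j = 1
    · subst h1; simp at hj
    · by_cases h1 : j = 0
      · exact .inr h1
      · exact .inl ⟨by omega, hj.2⟩
  set φ : ℕ → ℕ := fun j => if l - 1 ≤ j then j + 3 - l else c + 1 + j - l with hφ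
  have hinj : Set.InjOn φ A := by
    intro j hj k hk h
    simp only [hA, coe_filter, mem_Ico, Set.mem_ofPred_eq] at hj hk
    simp only [hφ] at h
    split_ifs at h <;> omega
  have hdisj : Disjoint (A.image φ) B := by
    rw [Finset.disjoint_left]
    intro k hk hkB
    obtain ⟨j, hj, rfl⟩ := Finset.mem_image.1 hk
    simp only [hA, hB, mem_filter, mem_Ico] at hj hkB
    obtain ⟨⟨hj2, hjc⟩, hj⟩ := hj
    obtain ⟨⟨hk2, hkc⟩, hk⟩ := hkB
    apply hno
    by_cases hlj : l - 1 ≤ j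
    · simp only [hφ, if_pos hlj] at hk hk2 hkc
      refine ⟨seg f i 2 ++ seg f (i + (j + 3 - l)) (l - 3 + 1), by simp; omega, ?_, ?_, ?_, ?_⟩
      · rw [List.nodup_append']
        refine ⟨hf.nodup_seg _ _ (by omega), hf.nodup_seg _ _ (by omega), ?_⟩
        intro x hx hx2
        obtain ⟨t, h1, h2, rfl⟩ := mem_seg.1 hx2
        obtain ⟨s, h3, h4, h5⟩ := mem_seg.1 hx
        exact hf.inj s t (by omega) (by omega) h5
      · intro x hx
        rcases List.mem_append.1 hx with hx | hx <;>
        · obtain ⟨t, -, -, rfl⟩ := mem_seg.1 hx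
          exact hfS t
      · refine List.isChain_append.2 ⟨hf.chain_seg _ _, hf.chain_seg _ _, ?_⟩
        rw [last_seg, head_seg _ _ _ (by omega)]
        simpa using hk
      · simp only [List.getLast?_append, List.head?_append, last_seg]
        rw [head_seg _ _ _ (by omega), show i + (j + 3 - l) + (l - 3) = i + j by omega]
        simpa using hj.symm
    · simp only [hφ, if_neg hlj] at hk hk2 hkc
      refine ⟨seg f (i + (c + 1 + j - l)) (l - 1 - j + 1) ++ (seg f (i + 1) (j - 1 + 1)).reverse,
        by simp; omega, ?_, ?_, ?_, ?_⟩
      · rw [List.nodup_append', List.nodup_reverse]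
        refine ⟨hf.nodup_seg _ _ (by omega), hf.nodup_seg _ _ (by omega), ?_⟩
        intro x hx hx2
        obtain ⟨t, h1, h2, rfl⟩ := mem_seg.1 hx
        obtain ⟨s, h3, h4, h5⟩ := mem_seg.1 (List.mem_reverse.1 hx2)
        exact hf.inj s t (by omega) (by omega) h5
      · intro x hx
        rcases List.mem_append.1 hx with hx | hx
        · obtain ⟨t, -, -, rfl⟩ := mem_seg.1 hx
          exact hfS t
        · obtain ⟨t, -, -, rfl⟩ := mem_seg.1 (List.mem_reverse.1 hx)
          exact hfS t
      · refine List.isChain_append.2 ⟨hf.chain_seg _ _, ?_, ?_⟩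
        · rw [List.isChain_reverse]; exact (hf.chain_seg _ _).imp fun _ _ h => h.symm
        · rw [last_seg, List.head?_reverse, last_seg, show i + 1 + (j - 1) = i + j by omega,
            show i + (c + 1 + j - l) + (l - 1 - j) = i + c by omega, hf.per]
          simpa using hj
      · rw [List.getLast?_append, List.head?_append, List.getLast?_reverse,
          head_seg _ _ _ (by omega), head_seg _ _ _ (by omega)]
        simpa using hk
  have hsub : A.image φ ∪ B ⊆ Ico 2 c := by
    intro k hk
    rcases mem_union.1 hk with hk | hk
    · obtain ⟨j, hj, rfl⟩ := Finset.mem_image.1 hk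
      simp only [hA, mem_filter, mem_Ico] at hj
      simp only [hφ, mem_Ico]
      split_ifs <;> omega
    · exact (mem_filter.1 hk).1
  have := card_le_card hsub
  rw [card_union_of_disjoint hdisj, card_image_of_injOn hinj, Nat.card_Ico] at this
  omega

lemma sum_shift (h : ℕ → ℕ) (hper : ∀ t, h (t + c) = h t) (a : ℕ) :
    ∑ t ∈ range c, h (t + a) = ∑ t ∈ range c, h t := by
  induction a with
  | zero => simp
  | succ a ih =>
    rw [← ih]
    have h1 := sum_range_succ (fun t => h (t + a)) c
    have h2 := sum_range_succ' (fun t => h (t + a)) c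
    have h3 : h (c + a) = h (0 + a) := by rw [Nat.add_comm c a, hper, Nat.zero_add]
    have h4 : ∑ t ∈ range c, h (t + 1 + a) = ∑ t ∈ range c, h (t + (a + 1)) :=
      sum_congr rfl fun t _ => by congr 1; omega
    omega

/-- **Bondy**: a graph on `c` vertices with a Hamilton cycle and more than `c² / 4` edges is
pancyclic. -/
lemma pancyclic (hf : Cyc G f c) {S : Finset V} (hfS : ∀ t, f t ∈ S) {l : ℕ} (hl : 3 ≤ l)
    (hlc : l ≤ c) (hE : 2 * (c ^ 2 / 4) < E2 G ((range c).image f)) : HasCyc G S l := by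
  by_contra hno
  have h1 : E2 G ((range c).image f) = ∑ t ∈ range c, nbr G f c (f t) := by
    unfold E2
    rw [sum_image]
    · exact sum_congr rfl fun t _ => hf.deg_image _
    · intro s hs t ht h
      simp only [coe_range, Set.mem_Iio] at hs ht
      by_contra hne
      exact hf.ne_of_lt hne (by omega) (by omega) h
  have h2 := sum_shift (c := c) (fun t => nbr G f c (f t)) (fun t => by simp [hf.per t]) 1
  have h3 : ∑ t ∈ range c, (nbr G f c (f t) + nbr G f c (f (t + 1))) ≤ ∑ t ∈ range c, c :=
    sum_le_sum fun t _ => hf.nbr_add_le hfS hl hlc hno t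
  rw [sum_add_distrib, h2, ← h1, sum_const, card_range, smul_eq_mul] at h3
  -- now `2 * E2 ≤ c²`, and rounding loses nothing because `c² % 4` is `0` or `1`
  have h4 : c ^ 2 % 4 = 0 ∨ c ^ 2 % 4 = 1 := by
    rcases Nat.even_or_odd' c with ⟨m, rfl | rfl⟩
    · left; ring_nf; omega
    · right; ring_nf; omega
  have h5 : c ^ 2 = c * c := by ring
  omega

end Cyc

/-! ### A vertex of small degree off a longest cycle -/

namespace Cyc

variable {f : ℕ → V} {c : ℕ}

lemma image_subset {S : Finset V} (hfS : ∀ t, f t ∈ S) : (range c).image f ⊆ S := by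
  intro x hx
  obtain ⟨t, -, rfl⟩ := Finset.mem_image.1 hx
  exact hfS t

lemma deg_split (hf : Cyc G f c) {S : Finset V} (hfS : ∀ t, f t ∈ S) (x : V) :
    deg G S x = nbr G f c x + deg G (S \ (range c).image f) x := by
  rw [← hf.deg_image x]
  unfold deg
  rw [← card_union_of_disjoint, ← filter_union, union_sdiff_of_subset (image_subset hfS)]
  exact disjoint_filter_filter disjoint_sdiff

lemma card_split (hf : Cyc G f c) {S : Finset V} (hfS : ∀ t, f t ∈ S) :
    #S = c + #(S \ (range c).image f) := by
  have := card_sdiff_add_card_eq_card (image_subset (c := c) hfS)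
  rw [hf.image_card] at this
  omega

lemma notMem_sdiff (hf : Cyc G f c) {S : Finset V} (t : ℕ) : f t ∉ S \ (range c).image f := by
  simp [hf.mem_image t]

lemma exists_adj_of_nbr_pos {x : V} (h : 0 < nbr G f c x) : ∃ i < c, G.Adj x (f i) := by
  obtain ⟨i, hi⟩ := card_pos.1 h
  simp only [mem_filter, mem_Ico] at hi
  exact ⟨i, hi.1.2, hi.2⟩

/-- If a longest cycle covers more than half of `S` but not all of it, then some vertex off the
cycle has degree at most `#S / 2`: the two ends of a longest path off the cycle, on `q` vertices,
have together at most `c + 1 - q` neighbours on the cycle. -/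
lemma exists_deg_le_half (hf : Cyc G f c) {S : Finset V} (hfS : ∀ t, f t ∈ S)
    (hmax : ∀ L, HasCyc G S L → L ≤ c) (hR : (S \ (range c).image f).Nonempty)
    (hrc : #(S \ (range c).image f) < c) :
    ∃ v ∈ S \ (range c).image f, 2 * deg G S v ≤ #S := by
  have hcard := hf.card_split hfS
  have hfR := hf.notMem_sdiff (S := S)
  have hsplit := hf.deg_split hfS
  have hRS : S \ (range c).image f ⊆ S := sdiff_subset
  generalize S \ (range c).image f = R at *
  by_contra! H
  obtain ⟨u, w, p, hp, hu, hw⟩ := exists_longest (G := G) hR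
  have hq := hp.length_le
  have hq0 := hp.length_pos
  have hdu := deg_le_of_subset_path hp.reverse fun z hz h => by simpa using hu z hz h
  rw [List.length_reverse] at hdu
  have hdw := deg_le_of_subset_path hp hw
  have Hu := H u (hp.sub _ hp.head_mem)
  have Hw := H w (hp.sub _ hp.last_mem)
  rw [hsplit] at Hu Hw
  -- a shortest arc from a neighbour of `u` to a neighbour of `w`
  have hex : ∃ g, (1 ≤ g ∧ ∃ i, G.Adj u (f i) ∧ G.Adj w (f (i + g))) ∧ g ≤ c := by
    obtain ⟨i, hic, hi⟩ := exists_adj_of_nbr_pos (show 0 < nbr G f c u by omega)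
    obtain ⟨j, hjc, hj⟩ := exists_adj_of_nbr_pos (show 0 < nbr G f c w by omega)
    by_cases hij : i < j
    · exact ⟨j - i, ⟨by omega, i, hi, by rwa [show i + (j - i) = j by omega]⟩, by omega⟩
    · exact ⟨j + c - i, ⟨by omega, i, hi, by
        rwa [show i + (j + c - i) = j + c by omega, hf.per]⟩, by omega⟩
  obtain ⟨g, ⟨⟨hg1, i, hui, hwi⟩, hgc⟩, hmin⟩ : ∃ g,
      ((1 ≤ g ∧ ∃ i, G.Adj u (f i) ∧ G.Adj w (f (i + g))) ∧ g ≤ c) ∧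
      ∀ g', 1 ≤ g' → g' < g → ∀ i, G.Adj u (f i) → ¬ G.Adj w (f (i + g')) :=
    ⟨Nat.find hex, Nat.find_spec hex, fun g' h1 h2 i h3 h4 =>
      Nat.find_min hex h2 ⟨⟨h1, i, h3, h4⟩, h2.le.trans (Nat.find_spec hex).2⟩⟩
  have hgq := hmax _ (hf.detour hfS hRS hfR hp hg1 hgc hui hwi)
  set A := {t ∈ Ico 1 (1 + c) | G.Adj u (f (i + t))} with hA
  set B := {t ∈ Ico 1 (1 + c) | G.Adj w (f (i + t))} with hB
  have hAc : #A = nbr G f c u := hf.nbr_window 1 i u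
  have hBc : #B = nbr G f c w := hf.nbr_window 1 i w
  have hAg : ∀ t ∈ A, g ≤ t ∧ t ≤ c := by
    intro t ht
    simp only [hA, mem_filter, mem_Ico] at ht
    refine ⟨?_, by omega⟩
    by_contra! hlt
    exact hmin (g - t) (by omega) (by omega) (i + t) ht.2
      (by rwa [show i + t + (g - t) = i + g by omega])
  have hBg : ∀ t ∈ B, g ≤ t ∧ t ≤ c := by
    intro t ht
    simp only [hB, mem_filter, mem_Ico] at ht
    refine ⟨?_, by omega⟩
    by_contra! hlt
    exact hmin t (by omega) hlt i hui ht.2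
  have hdisj : Disjoint A (B.image (· + 1)) := by
    rw [Finset.disjoint_left]
    intro t htA htB
    obtain ⟨s, hs, rfl⟩ := Finset.mem_image.1 htB
    have h1 := (mem_filter.1 htA).2
    have h2 := (mem_filter.1 hs).2
    have := hmax _ (hf.detour hfS hRS hfR hp.reverse le_rfl (by have := hf.three; omega) h2 h1)
    rw [List.length_reverse] at this
    omega
  have hsub : A ∪ B.image (· + 1) ⊆ Icc g (c + 1) := by
    intro t ht
    rw [mem_Icc]
    rcases mem_union.1 ht with ht | ht
    · have := hAg t ht; omega
    · obtain ⟨s, hs, rfl⟩ := Finset.mem_image.1 ht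
      have := hBg s hs; omega
  have := card_le_card hsub
  rw [card_union_of_disjoint hdisj, card_image_of_injective _ (add_left_injective 1),
    Nat.card_Icc] at this
  omega

end Cyc

/-! ### Counting edges against the circumference -/

lemma card_le_of_shift {B X : Finset ℕ} {a d : ℕ} (hX : ∀ b ∈ B, ∃ x ∈ X, x + d = b + a) :
    #B ≤ #X := by
  choose! φ h1 h2 using hX
  refine card_le_card_of_injOn φ h1 fun x hx y hy h => ?_
  have h3 := h2 x hx
  have h4 := h2 y hy
  omega

/-- If `B` is nonempty without consecutive elements and `q ≥ 2`, then the sumset `B + [1, q]` has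
at least `2 * #B + q - 2` elements: it contains `B + 1`, `B + 2` and `max B + [3, q]`. -/
lemma two_mul_card_le_of_shift {B X : Finset ℕ} {q d : ℕ} (hne : B.Nonempty)
    (hB : ∀ b ∈ B, b + 1 ∉ B) (hq : 2 ≤ q)
    (hX : ∀ b ∈ B, ∀ a, 1 ≤ a → a ≤ q → ∃ x ∈ X, x + d = b + a) : 2 * #B + q ≤ #X + 2 := by
  have h1 : (B.image (· + 1) ∪ B.image (· + 2)) ∪ Icc (B.max' hne + 3) (B.max' hne + q) ⊆
      X.image (· + d) := by
    intro t ht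
    rw [Finset.mem_image]
    rcases mem_union.1 ht with ht | ht
    · rcases mem_union.1 ht with ht | ht
      · obtain ⟨b, hb, rfl⟩ := Finset.mem_image.1 ht
        exact hX b hb 1 le_rfl (by omega)
      · obtain ⟨b, hb, rfl⟩ := Finset.mem_image.1 ht
        exact hX b hb 2 (by omega) (by omega)
    · rw [mem_Icc] at ht
      obtain ⟨x, hx, h⟩ := hX _ (B.max'_mem hne) (t - B.max' hne) (by omega) (by omega)
      exact ⟨x, hx, by omega⟩
  have h2 := (card_le_card h1).trans card_image_le
  rw [card_union_of_disjoint, card_union_of_disjoint, card_image_of_injective _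
    (add_left_injective 1), card_image_of_injective _ (add_left_injective 2), Nat.card_Icc] at h2
  · omega
  · rw [Finset.disjoint_left]
    intro t ht ht2
    obtain ⟨b, hb, rfl⟩ := Finset.mem_image.1 ht
    obtain ⟨b', hb', h⟩ := Finset.mem_image.1 ht2
    refine hB b' hb' ?_
    rwa [show b' + 1 = b by simp at h; omega]
  · rw [Finset.disjoint_left]
    intro t ht ht2
    rw [mem_Icc] at ht2
    have : ∃ b ∈ B, t ≤ b + 2 := by
      rcases mem_union.1 ht with ht | ht <;>
      · obtain ⟨b, hb, rfl⟩ := Finset.mem_image.1 ht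
        exact ⟨b, hb, by simp⟩
    obtain ⟨b, hb, h⟩ := this
    have := B.le_max' b hb
    omega

lemma deg_lt_card {S : Finset V} {v : V} (hv : v ∈ S) : deg G S v < #S := by
  exact card_lt_card (filter_ssubset.2 ⟨v, hv, by simp⟩)

lemma E2_erase {S : Finset V} {v : V} (hv : v ∈ S) : E2 G S = E2 G (S.erase v) + 2 * deg G S v := by
  have h1 : ∀ x, deg G S x = deg G (S.erase v) x + if G.Adj v x then 1 else 0 := by
    intro x
    unfold deg
    conv_lhs => rw [← insert_erase hv, filter_insert]
    split_ifs with h2 h3 h3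
    · rw [card_insert_of_notMem (by simp)]
    · exact absurd h2.symm h3
    · exact absurd h3.symm h2
    · rfl
  unfold E2
  rw [← add_sum_erase S _ hv, sum_congr rfl fun x _ => h1 x, sum_add_distrib]
  have h2 : ∑ x ∈ S.erase v, (if G.Adj v x then 1 else 0) = deg G S v := by
    rw [h1 v]
    simp [deg]
  omega

namespace Cyc

variable {f : ℕ → V} {c : ℕ}

/-- The number of vertices of the cycle, other than `f t`, that are not adjacent to `f t`. -/
noncomputable def miss (G : SimpleGraph V) (f : ℕ → V) (c t : ℕ) : ℕ :=
  #{s ∈ Ico 1 c | ¬ G.Adj (f t) (f (t + s))}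

lemma nbr_add_miss (hf : Cyc G f c) (t : ℕ) : nbr G f c (f t) + miss G f c t = c - 1 := by
  have h3 := hf.three
  have h1 : {s ∈ Ico 0 (0 + c) | G.Adj (f t) (f (t + s))} =
      {s ∈ Ico 1 c | G.Adj (f t) (f (t + s))} := by
    ext s
    simp only [mem_filter, mem_Ico]
    constructor
    · rintro ⟨h, hs⟩
      refine ⟨⟨?_, by omega⟩, hs⟩
      rcases Nat.eq_zero_or_pos s with rfl | h0
      · simp at hs
      · exact h0
    · rintro ⟨h, hs⟩; exact ⟨by omega, hs⟩
  rw [← hf.nbr_window 0 t, h1, miss, card_filter_add_card_filter_not, Nat.card_Ico]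

lemma miss_per (hf : Cyc G f c) (t : ℕ) : miss G f c (t + c) = miss G f c t := by
  unfold miss
  simp only [hf.per, show ∀ s, t + c + s = t + s + c by intro s; omega]

/-- If `x` has no two consecutive neighbours on the cycle, then the deficiencies at the first and
second successors of the neighbours of `x` add up to at most the total deficiency. -/
lemma sum_miss_le (hf : Cyc G f c) {x : V} (hx : ∀ t, G.Adj x (f t) → ¬ G.Adj x (f (t + 1))) :
    ∑ t ∈ range c with G.Adj x (f t), (miss G f c (t + 1) + miss G f c (t + 2)) ≤
      ∑ t ∈ range c, miss G f c t := by
  have h1 := sum_shift (c := c) (fun t => if G.Adj x (f t) then miss G f c (t + 1) else 0)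
    (fun t => by simp only [hf.per, show t + c + 1 = t + 1 + c by omega, hf.miss_per]) 1
  have h2 := sum_shift (c := c) (fun t => miss G f c t) (fun t => hf.miss_per t) 2
  rw [sum_filter, ← h2]
  calc _ = ∑ t ∈ range c, (if G.Adj x (f t) then miss G f c (t + 1) else 0) +
        ∑ t ∈ range c, (if G.Adj x (f t) then miss G f c (t + 2) else 0) := by
        rw [← sum_add_distrib]
        exact sum_congr rfl fun t _ => by split_ifs <;> simp
    _ ≤ _ := by
        rw [← h1, ← sum_add_distrib]
        refine sum_le_sum fun t _ => ?_
        have := hx t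
        split_ifs <;> simp_all

/-- Let `v ∉ C` be joined to `w` by a path on `q` vertices off the longest cycle `C`, and let
`v ~ f i`. The deficiencies of `f (i + 1)` and `f (i + 2)` are bounded below in terms of the
number `#B` of neighbours of `w` on `C` other than `f i`. -/
lemma miss_bounds (hf : Cyc G f c) {S R : Finset V} (hfS : ∀ t, f t ∈ S) (hRS : R ⊆ S)
    (hfR : ∀ t, f t ∉ R) (hmax : ∀ L, HasCyc G S L → L ≤ c) {v w : V} {p : List V}
    (hp : IsPth G R v w p) {i : ℕ} (hi : G.Adj v (f i)) {B : Finset ℕ}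
    (hBdef : B = {g ∈ Ico 1 c | G.Adj w (f (i + g))}) :
    #B ≤ miss G f c (i + 1) ∧
    (B.Nonempty → 2 ≤ p.length → 2 * #B + p.length ≤ miss G f c (i + 1) + 2) ∧
    (2 ≤ p.length → #B ≤ miss G f c (i + 2)) ∧
    (B.Nonempty → 3 ≤ p.length → 2 * #B + p.length ≤ miss G f c (i + 2) + 3) := by
  have h3 := hf.three
  have hq0 := hp.length_pos
  have hBr : ∀ g ∈ B, p.length + 1 ≤ g ∧ g + p.length + 1 ≤ c := by
    intro g hg
    simp only [hBdef, mem_filter, mem_Ico] at hg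
    have h1 := hmax _ (hf.detour hfS hRS hfR hp hg.1.1 hg.1.2.le hi hg.2)
    have h2 := hmax _ (hf.detour hfS hRS hfR hp.reverse (i := i + g) (g := c - g) (by omega)
      (by omega) hg.2 (by rwa [show i + g + (c - g) = i + c by omega, hf.per]))
    rw [List.length_reverse] at h2
    omega
  have hBno : ∀ g ∈ B, g + 1 ∉ B := by
    intro g hg hg2
    simp only [hBdef, mem_filter, mem_Ico] at hg hg2
    have h1 := hmax _ (hf.detour hfS hRS hfR (.singleton (hp.sub _ hp.last_mem)) le_rfl
      (by omega) hg.2 (by rw [Nat.add_assoc]; exact hg2.2))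
    simp at h1
    omega
  -- `f (i + a)` and `f (i + g + b)` are not adjacent when `a + b ≤ q + 1`
  have key : ∀ a, 1 ≤ a → ∀ g ∈ B, ∀ b, 1 ≤ b → a + b ≤ p.length + 1 →
      ∃ x ∈ ({s ∈ Ico 1 c | ¬ G.Adj (f (i + a)) (f (i + a + s))} : Finset ℕ), x + a = g + b := by
    intro a ha g hg b hb hab
    have hr := hBr g hg
    simp only [hBdef, mem_filter, mem_Ico] at hg
    refine ⟨g + b - a, ?_, by omega⟩
    simp only [mem_filter, mem_Ico]
    refine ⟨by omega, fun h => ?_⟩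
    have h1 := hmax _ (hf.detour_chord hfS hRS hfR hp ha (by omega) hb (by omega) hi hg.2
      (by rwa [show i + a + (g + b - a) = i + g + b by omega] at h))
    omega
  refine ⟨card_le_of_shift (a := 1) fun g hg => key 1 le_rfl g hg 1 le_rfl (by omega),
    fun hne hq => two_mul_card_le_of_shift hne hBno hq fun g hg b hb hbq =>
      key 1 le_rfl g hg b hb (by omega),
    fun hq => card_le_of_shift (a := 1) fun g hg => key 2 (by omega) g hg 1 le_rfl (by omega),
    fun hne hq => ?_⟩
  have := two_mul_card_le_of_shift (q := p.length - 1) hne hBno (by omega) fun g hg b hb hbq =>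
      key 2 (by omega) g hg b hb (by omega)
  unfold miss
  omega

/-- If all vertices off a longest cycle have degree more than `r`, the number of vertices off the
cycle, then the edges meeting such a vertex are compensated by edges missing on the cycle. -/
lemma mul_le_miss (hf : Cyc G f c) {S R : Finset V} (hfS : ∀ t, f t ∈ S) (hRS : R ⊆ S)
    (hfR : ∀ t, f t ∉ R) (hmax : ∀ L, HasCyc G S L → L ≤ c)
    (hdeg : ∀ x ∈ R, #R + 1 ≤ nbr G f c x + deg G R x) {v : V} (hv : v ∈ R) :
    #R * (2 * nbr G f c v + deg G R v) ≤ #R * (#R + 1) + ∑ t ∈ range c, miss G f c t := by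
  have h3 := hf.three
  obtain ⟨w, p, hp, hw⟩ := exists_longest_from (G := G) hv
  have hq := hp.length_le
  have hq0 := hp.length_pos
  have hρ := deg_lt_card (G := G) hv
  have hβ := hdeg w (hp.sub _ hp.last_mem)
  have hsum := hf.sum_miss_le (x := v) (fun t h1 h2 => by
    have h1 := hmax _ (hf.detour hfS hRS hfR (.singleton hv) le_rfl (by omega) h1 h2)
    simp at h1
    omega)
  have hD : #{t ∈ range c | G.Adj v (f t)} = nbr G f c v := by simp [nbr]
  have hBcard : ∀ i, #{g ∈ Ico 1 c | G.Adj w (f (i + g))} + (if G.Adj w (f i) then 1 else 0) =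
      nbr G f c w := by
    intro i
    have h0 : insert 0 (Ico 1 c) = Ico 0 c := insert_Ico_add_one_left_eq_Ico (by omega)
    rw [← hf.nbr_window 0 i, Nat.zero_add, ← h0, filter_insert, Nat.add_zero]
    split_ifs
    · rw [card_insert_of_notMem (by simp)]
    · rfl
  generalize hT : ∑ t ∈ range c, miss G f c t = T at *
  obtain hq1 | hq2 : p.length = 1 ∨ 2 ≤ p.length := by omega
  · obtain ⟨y, rfl⟩ := List.length_eq_one_iff.1 hq1
    obtain rfl : y = v := by simpa using hp.head
    obtain rfl : y = w := by simpa using hp.last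
    have hterm : ∀ i ∈ ({t ∈ range c | G.Adj y (f t)} : Finset ℕ),
        nbr G f c y - 1 ≤ miss G f c (i + 1) + miss G f c (i + 2) := by
      intro i hi
      have hi := (mem_filter.1 hi).2
      have h1 := (hf.miss_bounds hfS hRS hfR hmax hp hi rfl).1
      have h2 := hBcard i
      rw [if_pos hi] at h2
      omega
    have h4 := (card_nsmul_le_sum _ _ _ hterm).trans hsum
    rw [hD, smul_eq_mul] at h4
    simp only [List.length_singleton] at hw
    rw [show deg G R y = 0 by omega]
    generalize nbr G f c y = D at *
    rcases Nat.eq_zero_or_pos D with rfl | hD0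
    · simp
    · obtain ⟨D, rfl⟩ := Nat.exists_eq_add_of_le' hD0
      rw [Nat.add_sub_cancel] at h4
      rcases le_or_gt #R D with h5 | h5
      · obtain ⟨e, rfl⟩ := Nat.exists_eq_add_of_le h5
        nlinarith
      · obtain ⟨e, he⟩ := Nat.exists_eq_add_of_lt h5
        rw [he]
        nlinarith
  · have hterm : ∀ i ∈ ({t ∈ range c | G.Adj v (f t)} : Finset ℕ),
        2 * #R ≤ (miss G f c (i + 1) + miss G f c (i + 2)) +
          (if nbr G f c w = 2 then if G.Adj w (f i) then 1 else 0 else 0) := by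
      intro i hi
      have hi := (mem_filter.1 hi).2
      obtain ⟨-, h4, h5, h6⟩ := hf.miss_bounds hfS hRS hfR hmax hp hi rfl
      have h2 := hBcard i
      have hne : ({g ∈ Ico 1 c | G.Adj w (f (i + g))} : Finset ℕ).Nonempty := by
        rw [← card_pos]
        split_ifs at h2 <;> omega
      have h4 := h4 hne hq2
      have h5 := h5 hq2
      have h6 := h6 hne
      obtain hq3 | hq3 : p.length = 2 ∨ 3 ≤ p.length := by omega
      · split_ifs at * <;> omega
      · have h6 := h6 hq3
        split_ifs at * <;> omega
    have h4 := card_nsmul_le_sum _ _ _ hterm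
    rw [sum_add_distrib, hD, smul_eq_mul] at h4
    have h5 : ∑ i ∈ range c with G.Adj v (f i),
        (if nbr G f c w = 2 then if G.Adj w (f i) then 1 else 0 else 0) ≤ 2 := by
      split_ifs with h
      · refine (sum_le_sum_of_subset (filter_subset _ _)).trans ?_
        rw [← card_filter, ← h]
        simp [nbr]
      · simp
    have h6 : #R * deg G R v ≤ #R * (#R - 1) := Nat.mul_le_mul_left _ (by omega)
    obtain ⟨r, hr⟩ : ∃ r, #R = r + 1 := ⟨#R - 1, by omega⟩
    rw [hr, Nat.add_sub_cancel] at h6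
    rw [hr] at h4 ⊢
    nlinarith

end Cyc

namespace Cyc

variable {f : ℕ → V} {c : ℕ}

lemma sum_image_eq (hf : Cyc G f c) (h : V → ℕ) :
    ∑ x ∈ (range c).image f, h x = ∑ t ∈ range c, h (f t) := by
  rw [sum_image]
  intro s hs t ht h
  simp only [coe_range, Set.mem_Iio] at hs ht
  by_contra hne
  exact hf.ne_of_lt hne (by omega) (by omega) h

lemma E2_split (hf : Cyc G f c) {S : Finset V} (hfS : ∀ t, f t ∈ S) :
    E2 G S = ∑ t ∈ range c, nbr G f c (f t) +
      ∑ v ∈ S \ (range c).image f, (2 * nbr G f c v + deg G (S \ (range c).image f) v) := by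
  have h1 : ∑ x ∈ (range c).image f, deg G (S \ (range c).image f) x =
      ∑ v ∈ S \ (range c).image f, nbr G f c v := by
    simp only [← hf.deg_image]
    unfold deg
    simp only [card_filter]
    rw [sum_comm]
    simp only [G.adj_comm]
  unfold E2
  rw [← sum_sdiff (image_subset (c := c) hfS), sum_congr rfl fun x _ => hf.deg_split hfS x,
    sum_congr (s₁ := (range c).image f) rfl fun x _ => hf.deg_split hfS x, sum_add_distrib,
    sum_add_distrib, sum_add_distrib, h1, hf.sum_image_eq, ← mul_sum]
  omega

/-- Removing a vertex off the cycle. -/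
lemma erase_setup (hf : Cyc G f c) {S : Finset V} (hfS : ∀ t, f t ∈ S) {v : V}
    (hv : v ∈ S \ (range c).image f) : (∀ t, f t ∈ S.erase v) ∧
      S.erase v \ (range c).image f = (S \ (range c).image f).erase v := by
  refine ⟨fun t => mem_erase.2 ⟨?_, hfS t⟩, erase_sdiff_comm _ _ _⟩
  rintro rfl
  exact hf.notMem_sdiff _ hv

/-- **Woodall's bound**: a graph on `c + r` vertices with circumference `c` has at most
`c (c - 1) / 2 + r (r + 1) / 2` edges. -/
lemma E2_le (hf : Cyc G f c) {S : Finset V} (hfS : ∀ t, f t ∈ S)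
    (hmax : ∀ L, HasCyc G S L → L ≤ c) {r : ℕ} (hr : #(S \ (range c).image f) = r) :
    E2 G S ≤ c * (c - 1) + r * (r + 1) := by
  induction r generalizing S with
  | zero =>
    rw [hf.E2_split hfS, card_eq_zero.1 hr, sum_empty]
    have : ∑ t ∈ range c, nbr G f c (f t) ≤ ∑ t ∈ range c, (c - 1) :=
      sum_le_sum fun t _ => by have := hf.nbr_add_miss t; omega
    simpa using this
  | succ r ih =>
    by_cases hA : ∃ v ∈ S \ (range c).image f, deg G S v ≤ r + 1
    · obtain ⟨v, hv, hd⟩ := hA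
      obtain ⟨h1, h2⟩ := hf.erase_setup hfS hv
      have h3 := ih h1 (fun L hL => hmax L (hL.mono (erase_subset _ _)))
        (by rw [h2, card_erase_of_mem hv, hr, Nat.add_sub_cancel])
      rw [E2_erase (mem_sdiff.1 hv).1]
      nlinarith
    · push Not at hA
      have hE := hf.E2_split hfS
      have hm := fun v => hf.mul_le_miss (v := v) hfS
        (sdiff_subset (s := S) (t := (range c).image f)) hf.notMem_sdiff hmax
        fun x hx => by rw [hr, ← hf.deg_split hfS]; exact hA x hx
      have hT : ∑ t ∈ range c, nbr G f c (f t) + ∑ t ∈ range c, miss G f c t = c * (c - 1) := by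
        rw [← sum_add_distrib, sum_congr rfl fun t _ => hf.nbr_add_miss t]
        simp
      have h4 := sum_le_card_nsmul _ _ _ hm
      rw [← mul_sum, smul_eq_mul, hr] at h4
      have h5 := Nat.le_of_mul_le_mul_left h4 (Nat.succ_pos r)
      omega

lemma dense_erase_arith {n d E : ℕ} (hn : 1 ≤ n) (hd : 2 * d ≤ n)
    (h : 2 * (n ^ 2 / 4) < E + 2 * d) : 2 * ((n - 1) ^ 2 / 4) < E := by
  obtain ⟨n, rfl⟩ := Nat.exists_eq_add_of_le' hn
  rw [Nat.add_sub_cancel]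
  rcases Nat.even_or_odd' n with ⟨m, rfl | rfl⟩
  · have h1 : (2 * m + 1) ^ 2 / 4 = m ^ 2 + m := by
      rw [show (2 * m + 1) ^ 2 = 1 + (m ^ 2 + m) * 4 by ring, Nat.add_mul_div_right _ _ (by omega)]
      omega
    have h2 : (2 * m) ^ 2 / 4 = m ^ 2 := by
      rw [show (2 * m) ^ 2 = m ^ 2 * 4 by ring, Nat.mul_div_cancel _ (by omega)]
    omega
  · have h1 : (2 * m + 1) ^ 2 / 4 = m ^ 2 + m := by
      rw [show (2 * m + 1) ^ 2 = 1 + (m ^ 2 + m) * 4 by ring, Nat.add_mul_div_right _ _ (by omega)]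
      omega
    have h2 : (2 * m + 1 + 1) ^ 2 / 4 = m ^ 2 + 2 * m + 1 := by
      rw [show (2 * m + 1 + 1) ^ 2 = (m ^ 2 + 2 * m + 1) * 4 by ring,
        Nat.mul_div_cancel _ (by omega)]
    omega

/-- If a longest cycle covers more than half of `S`, then density passes from `S` to the vertex
set of the cycle, by deleting low-degree vertices one at a time. -/
lemma dense_image (hf : Cyc G f c) {S : Finset V} (hfS : ∀ t, f t ∈ S)
    (hmax : ∀ L, HasCyc G S L → L ≤ c) {r : ℕ} (hr : #(S \ (range c).image f) = r)
    (hrc : r < c) (hE : 2 * (#S ^ 2 / 4) < E2 G S) :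
    2 * (c ^ 2 / 4) < E2 G ((range c).image f) := by
  induction r generalizing S with
  | zero =>
    have h1 := sdiff_eq_empty_iff_subset.1 (card_eq_zero.1 hr)
    rw [h1.antisymm (image_subset hfS), hf.image_card] at hE
    exact hE
  | succ r ih =>
    obtain ⟨v, hv, hd⟩ := hf.exists_deg_le_half hfS hmax (card_pos.1 (by omega)) (by omega)
    obtain ⟨h1, h2⟩ := hf.erase_setup hfS hv
    have hvS := (mem_sdiff.1 hv).1
    refine ih h1 (fun L hL => hmax L (hL.mono (erase_subset _ _)))
      (by rw [h2, card_erase_of_mem hv, hr, Nat.add_sub_cancel]) (by omega) ?_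
    rw [E2_erase hvS] at hE
    rw [card_erase_of_mem hvS]
    exact dense_erase_arith (card_pos.2 ⟨v, hvS⟩) hd hE

end Cyc

/-! ### Dense graphs contain all short cycles -/

lemma E2_le_card (S : Finset V) : E2 G S ≤ #S * (#S - 1) := by
  unfold E2
  refine (sum_le_card_nsmul _ _ (#S - 1) fun v hv => ?_).trans (by simp)
  have := deg_lt_card (G := G) hv
  omega

/-- If all neighbours of an end `u` of a path lie on the path, closing the path up at the farthest
of them gives a cycle through `u` and all its neighbours. -/
lemma exists_hasCyc_of_path {R : Finset V} {u w : V} {p : List V} (hp : IsPth G R u w p)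
    (hu : ∀ z ∈ R, G.Adj u z → z ∈ p) (hd : 0 < deg G R u) :
    ∃ L, deg G R u + 1 ≤ L ∧ HasCyc G R L := by
  set J := {j ∈ range p.length | G.Adj u (p.getD j u)} with hJ
  have hcard : deg G R u ≤ #J := by
    refine card_le_card_of_injOn (fun x => p.idxOf x) ?_ ?_
    · intro x hx
      simp only [coe_filter, Set.mem_ofPred_eq] at hx
      have h1 := List.idxOf_lt_length_of_mem (hu x hx.1 hx.2)
      simp only [hJ, coe_filter, Set.mem_ofPred_eq, mem_range]
      refine ⟨h1, ?_⟩
      rw [List.getD_eq_getElem _ _ h1, List.getElem_idxOf]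
      exact hx.2
    · intro x hx y hy h
      simp only [coe_filter, Set.mem_ofPred_eq] at hx hy
      exact (List.idxOf_inj (hu x hx.1 hx.2)).1 h
  have hne : J.Nonempty := card_pos.1 (by omega)
  obtain ⟨hj, hadj⟩ := mem_filter.1 (J.max'_mem hne)
  rw [mem_range] at hj
  have hsub : J ⊆ Icc 1 (J.max' hne) := by
    intro t ht
    rw [mem_Icc]
    refine ⟨?_, J.le_max' t ht⟩
    rcases Nat.eq_zero_or_pos t with rfl | h0
    · have := (mem_filter.1 ht).2
      have h2 := hp.head
      rw [List.head?_eq_getElem?] at h2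
      simp [List.getD, h2] at this
    · exact h0
  have hle := card_le_card hsub
  rw [Nat.card_Icc] at hle
  generalize J.max' hne = j at *
  refine ⟨j + 1, by omega, p.take (j + 1), by simp; omega, hp.nodup.sublist (List.take_sublist _ _),
    fun x hx => hp.sub x (List.mem_of_mem_take hx), hp.chain.take _, ?_⟩
  rw [List.getD_eq_getElem _ _ hj] at hadj
  rw [List.head?_take, List.getLast?_take, hp.head]
  simpa [hj] using hadj.symm

lemma exists_longest_cyc {S : Finset V} {L : ℕ} (hL : 3 ≤ L) (h : HasCyc G S L) :
    ∃ c f, L ≤ c ∧ Cyc G f c ∧ (∀ t, f t ∈ S) ∧ ∀ L', HasCyc G S L' → L' ≤ c := by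
  have h1 : HasCyc G S (Nat.findGreatest (HasCyc G S) #S) := Nat.findGreatest_spec h.le_card h
  have h2 : ∀ L', HasCyc G S L' → L' ≤ Nat.findGreatest (HasCyc G S) #S :=
    fun L' h' => Nat.le_findGreatest h'.le_card h'
  obtain ⟨f, h3, h4⟩ := h1.unroll (hL.trans (h2 L h))
  exact ⟨_, f, h2 L h, h3, h4, h2⟩

lemma hasCyc_step {l : ℕ} (hl : 3 ≤ l)
    (ih : 4 ≤ l → ∀ S : Finset V, 2 ≤ #S → 2 * (l - 1) ≤ #S + 4 → 2 * (#S ^ 2 / 4) < E2 G S →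
      HasCyc G S (l - 1)) (n : ℕ) :
    ∀ S : Finset V, #S = n → 2 ≤ n → 2 * l ≤ n + 4 → 2 * (n ^ 2 / 4) < E2 G S → HasCyc G S l := by
  induction n with
  | zero => intros; omega
  | succ m ihm =>
    intro S hS hn hln hE
    by_cases hA : ∃ v ∈ S, 2 * deg G S v ≤ #S
    · obtain ⟨v, hv, hd⟩ := hA
      by_cases hm : 2 ≤ m ∧ 2 * l ≤ m + 4
      · rw [E2_erase hv] at hE
        exact (ihm (S.erase v) (by rw [card_erase_of_mem hv]; omega) hm.1 hm.2
          (Cyc.dense_erase_arith (n := m + 1) (by omega) (by omega) hE)).mono (erase_subset _ _)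
      obtain rfl | hm2 : m = 1 ∨ 2 ≤ m := by omega
      · have := E2_le_card (G := G) S
        rw [hS] at this
        omega
      -- now `m + 1 = 2 * l - 4` is the smallest admissible order
      obtain ⟨c, f, hlc, hf, hfS, hmax⟩ := exists_longest_cyc (by omega)
        (ih (by omega) S (by omega) (by omega) (by rwa [hS]))
      have hcard := hf.card_split hfS
      obtain hc | hc : c = l - 1 ∨ l ≤ c := by omega
      · have h1 := hf.E2_le hfS hmax rfl
        obtain ⟨N, rfl⟩ : ∃ N, l = N + 3 := ⟨l - 3, by omega⟩
        rw [show #(S \ (range c).image f) = N by omega, show c = N + 2 by omega] at h1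
        rw [show m + 1 = 2 * (N + 1) by omega,
          show (2 * (N + 1)) ^ 2 = (N + 1) ^ 2 * 4 by ring, Nat.mul_div_cancel _ (by omega)] at hE
        rw [show N + 2 - 1 = N + 1 by omega] at h1
        nlinarith
      · exact hf.pancyclic hfS hl hc (hf.dense_image hfS hmax rfl (by omega) (by rwa [hS]))
    · push Not at hA
      obtain ⟨u, w, p, hp, hu, -⟩ := exists_longest (G := G) (card_pos.1 (show 0 < #S by omega))
      have hdu := hA u (hp.sub _ hp.head_mem)
      obtain ⟨L, hL, hcyc⟩ := exists_hasCyc_of_path hp hu (by omega)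
      obtain ⟨c, f, hlc, hf, hfS, hmax⟩ := exists_longest_cyc (by omega) hcyc
      have hcard := hf.card_split hfS
      exact hf.pancyclic hfS hl (by omega) (hf.dense_image hfS hmax rfl (by omega) (by rwa [hS]))

/-- A graph on `n ≥ max 2 (2 l - 4)` vertices with more than `n² / 4` edges contains `C_l`. -/
lemma hasCyc_of_dense {l : ℕ} (hl : 3 ≤ l) : ∀ S : Finset V, 2 ≤ #S → 2 * l ≤ #S + 4 →
    2 * (#S ^ 2 / 4) < E2 G S → HasCyc G S l := by
  induction l, hl using Nat.le_induction with
  | base => exact fun S h1 h2 h3 => hasCyc_step le_rfl (by omega) _ S rfl h1 h2 h3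
  | succ l hl ih =>
    exact fun S h1 h2 h3 => hasCyc_step (by omega) (fun _ => by simpa using ih) _ S rfl h1 h2 h3

/-! ### The Turán number -/

lemma E2_univ {n : ℕ} (G : SimpleGraph (Fin n)) : E2 G univ = 2 * edgeCount G := by
  unfold edgeCount E2
  rw [← coe_edgeFinset, Set.ncard_coe_finset, ← sum_degrees_eq_twice_card_edges]
  refine sum_congr rfl fun v _ => ?_
  rw [← card_neighborFinset_eq_degree, deg]
  congr 1
  ext x
  simp

lemma edgeCount_le {n l : ℕ} (hl : 3 ≤ l) (hn : 2 ≤ n) (hln : 2 * l ≤ n + 4)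
    {G : SimpleGraph (Fin n)} (hG : ¬ ContainsCycleLength G l) : edgeCount G ≤ n ^ 2 / 4 := by
  by_contra! h
  refine hG ((hasCyc_of_dense hl univ (by simpa) (by simpa) ?_).contains hl)
  rw [E2_univ, card_univ, Fintype.card_fin]
  omega

lemma edgeCount_turanGraph (n : ℕ) : edgeCount (turanGraph n 2) = n ^ 2 / 4 := by
  unfold edgeCount
  rw [← coe_edgeFinset, Set.ncard_coe_finset, card_edgeFinset_turanGraph]
  rcases Nat.even_or_odd' n with ⟨m, rfl | rfl⟩
  · simp
  · rw [show (2 * m + 1) % 2 = 1 by omega]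
    simp
    ring_nf
    omega

lemma not_contains_turanGraph (n k : ℕ) :
    ¬ ContainsCycleLength (turanGraph n 2) (2 * k + 1) := by
  rintro ⟨v, w, -, hw⟩
  have h : (turanGraph n 2).Colorable 2 := ⟨Coloring.mk
    (fun v => ⟨v % 2, Nat.mod_lt _ (by omega)⟩) fun {v w} hvw h => turanGraph_adj.1 hvw (by
      simpa using h)⟩
  have := two_colorable_iff_forall_loop_even.1 h v w
  rw [hw, Nat.even_iff] at this
  omega

end OddCycleTuran

/-- For `k ≥ 2` and `n ≥ 4k-2`, `ex(n; C_{2k+1}) = ⌊n²/4⌋`. -/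
theorem ex_large (k n : ℕ) (hk : 2 ≤ k) (hn : 4 * k - 2 ≤ n) :
    exC n k = n ^ 2 / 4 := by
  have hub : ∀ m ∈ {m | ∃ G : SimpleGraph (Fin n), ¬ ContainsCycleLength G (2 * k + 1) ∧
      edgeCount G = m}, m ≤ n ^ 2 / 4 := by
    rintro m ⟨G, hG, rfl⟩
    exact OddCycleTuran.edgeCount_le (by omega) (by omega) (by omega) hG
  have hmem : n ^ 2 / 4 ∈ {m | ∃ G : SimpleGraph (Fin n), ¬ ContainsCycleLength G (2 * k + 1) ∧
      edgeCount G = m} :=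
    ⟨turanGraph n 2, OddCycleTuran.not_contains_turanGraph n k,
      OddCycleTuran.edgeCount_turanGraph n⟩
  exact le_antisymm (csSup_le ⟨_, hmem⟩ hub) (le_csSup ⟨_, hub⟩ hmem)
end
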